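/- Let G = (V,E) be a 2-connected finite simple graph. The base polytope B(M(G)) is 2-Gorenstein if and only if the following equalities hold: (1) |E| = 2(|V|−1); and (2) |E(S)| = 2|S|−3 for every good flat S ⊆ V. -/

import Mathlib

/-!
For a `2`-connected graph the cone over the base polytope has two kinds of facets: `x e = 0` for
edges `e` with `G ∖ e` `2`-connected (for at least three vertices), and `∑ e ∈ E(S), x e = (|S| - 1)
t` for good flats `S`. The corresponding forms (`coordForm`, `flatForm`) are nonnegative on spanning
trees, and they are reduced since they take the value one on a difference of two unit vectors, which
lies in the lattice of the cone.

Good flats are handled combinatorially: `S` is good if and only if `G[S]` is `2`-connected and the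
complement of `S` is connected (`isGoodFlat_iff`). If the complement of the endpoints of an edge `e`
is disconnected, then `G ∖ e` is `2`-connected (`biconnOn_deleteEdges`); otherwise these endpoints
form a good flat, with form `t - x e`. Every edge thus has a facet of its own, and in a
`2`-Gorenstein polytope the point `v` at height two must be the all-ones vector of `E`, since the
two forms take the values `v e` and `2 - v e` there. Evaluating the forms of the vertex set and of
good flats at this vector yields the equalities (`spade_of_gorenstein`). The graph on two vertices
is excluded because its polytope is a point, whose cone has the height as its only facet form.

For the converse two facts are needed. First, `v / 2` lies in the base polytope. By separation it
suffices to compare it with a spanning tree of minimum weight for an arbitrary edge weight; on every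
sublevel set of the weight such a tree spans each component (`card_le_of_level`), so summation by
parts reduces the comparison to the inequalities of connected vertex sets (`mem_basePolytope`).
These follow from those of good flats by splitting at cut vertices and by passing to complements of
components of complements (`flatForm_nonneg_of_connOn`). Second, every reduced facet form agrees on
the span of the cone with a `coordForm` or the `flatForm` of a good flat (`facet_classification`).
Indeed, the trees on which a facet form vanishes are the minimum weight spanning trees for its
coefficients, and a component of a sublevel set provides a coordinate form or a good flat form
vanishing on all of them; two such forms span the same facet (`facet_unique`).
-/

open SimpleGraph
open scoped Pointwise

namespace Gor

/-! ### Graph-theoretic notions -/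

/-- A graph is `2`-connected if it is connected and remains connected after deletion of any
single vertex.  A single edge `K₂` counts as `2`-connected. -/
def IsTwoConnected {V : Type*} (G : SimpleGraph V) : Prop :=
  G.Connected ∧ ∀ v : V, (G.induce {u : V | u ≠ v}).Connected

/-- `E(S)`: the set of edges of `G` with both endpoints in `S`. -/
def edgesIn {V : Type*} (G : SimpleGraph V) (S : Set V) : Set (Sym2 V) :=
  {e ∈ G.edgeSet | ∀ v ∈ e, v ∈ S}

/-- The simple graph obtained from `G` by contracting all edges in `F`: its vertices are the
connected components of the graph with edge set `F`, two being adjacent if some edge of `G`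
joins them. -/
def contractEdges {V : Type*} (G : SimpleGraph V) (F : Set (Sym2 V)) :
    SimpleGraph (SimpleGraph.fromEdgeSet F).ConnectedComponent :=
  SimpleGraph.fromRel fun c d => ∃ u v : V, G.Adj u v ∧
    (SimpleGraph.fromEdgeSet F).connectedComponentMk u = c ∧
    (SimpleGraph.fromEdgeSet F).connectedComponentMk v = d

/-- `S` is a good flat of `G`: the induced subgraph `G[S]` is `2`-connected and the contraction
of all edges of `E(S)` in `G` is `2`-connected. -/
def IsGoodFlat {V : Type*} (G : SimpleGraph V) (S : Set V) : Prop :=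
  IsTwoConnected (G.induce S) ∧ IsTwoConnected (contractEdges G (edgesIn G S))

/-- The weight function `w : E → {1, δ-1}` with `w e = 1` whenever `G∖e` is `2`-connected and
`w e = δ - 1` whenever `G/e` is `2`-connected. -/
def IsCanonicalWeight {V : Type*} (G : SimpleGraph V) (δ : ℕ) (w : Sym2 V → ℕ) : Prop :=
  (∀ e ∈ G.edgeSet, w e = 1 ∨ w e = δ - 1) ∧
  (∀ e ∈ G.edgeSet, IsTwoConnected (G.deleteEdges {e}) → w e = 1) ∧
  (∀ e ∈ G.edgeSet, IsTwoConnected (contractEdges G {e}) → w e = δ - 1)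

/-- A `2`-connected graph `G` satisfies `(♠)_δ` via the weight function `w`. -/
def SatisfiesSpade {V : Type*} (G : SimpleGraph V) (δ : ℕ) (w : Sym2 V → ℕ) : Prop :=
  IsTwoConnected G ∧ IsCanonicalWeight G δ w ∧
  (∑ᶠ e ∈ G.edgeSet, w e) = δ * (Nat.card V - 1) ∧
  ∀ S : Set V, IsGoodFlat G S → (∑ᶠ e ∈ edgesIn G S, w e) + 1 = δ * (S.ncard - 1)

/-- The number of `2`-connected components (blocks) of a graph: the number of inclusion-maximal
vertex subsets inducing a `2`-connected subgraph. -/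
noncomputable def numBlocks {V : Type*} (G : SimpleGraph V) : ℕ :=
  {S : Set V | IsTwoConnected (G.induce S) ∧
    ∀ T : Set V, S ⊆ T → IsTwoConnected (G.induce T) → S = T}.ncard

/-! ### Lattice polytopes and the Gorenstein property -/

/-- A point of `ℝ^η` is a lattice point if all its coordinates are integers. -/
def IsLatticePoint {η : Type*} (x : η → ℝ) : Prop := ∀ i, ∃ z : ℤ, x i = z

/-- The cone over a polytope `P ⊆ ℝ^η`, living in `ℝ^η × ℝ`. -/
def coneOver {η : Type*} (P : Set (η → ℝ)) : Set ((η → ℝ) × ℝ) :=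
  {y | ∃ t : ℝ, ∃ p ∈ P, 0 ≤ t ∧ y = (t • p, t)}

/-- The lattice affinely spanned by the lattice points of `P`, placed at height one;
i.e. the subgroup of `ℝ^η × ℝ` generated by `{(p, 1) : p a lattice point of P}`. -/
def coneLattice {η : Type*} (P : Set (η → ℝ)) : Submodule ℤ ((η → ℝ) × ℝ) :=
  Submodule.span ℤ {y | ∃ p ∈ P, IsLatticePoint p ∧ y = (p, 1)}

/-- `h` is a linear form cutting out a facet-supporting hyperplane of the cone over `P`:
it is nonnegative on the cone and vanishes on a subset of the cone spanning one dimension less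
than the cone itself. -/
def IsFacetForm {η : Type*} (P : Set (η → ℝ)) (h : ((η → ℝ) × ℝ) →ₗ[ℝ] ℝ) : Prop :=
  (∀ y ∈ coneOver P, 0 ≤ h y) ∧
  Module.finrank ℝ (Submodule.span ℝ {y ∈ coneOver P | h y = 0}) + 1 =
    Module.finrank ℝ (Submodule.span ℝ (coneOver P))

/-- `h` is reduced with respect to the lattice spanned by `P`: it takes integer values on the
lattice and attains the value `1` there. -/
def IsReducedForm {η : Type*} (P : Set (η → ℝ)) (h : ((η → ℝ) × ℝ) →ₗ[ℝ] ℝ) : Prop :=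
  (∀ y ∈ coneLattice P, ∃ z : ℤ, h y = z) ∧ ∃ y ∈ coneLattice P, h y = 1

/-- A polytope `P`, regarded as full-dimensional in the affine lattice it spans, is
`δ`-Gorenstein if there is a lattice point `v ∈ δP` with `h (v, δ) = 1` for the reduced
equation `h` of every facet-supporting hyperplane of the cone over `P`. -/
def IsDeltaGorenstein {η : Type*} (P : Set (η → ℝ)) (δ : ℕ) : Prop :=
  ∃ v : η → ℝ, v ∈ (δ : ℝ) • P ∧ (v, (δ : ℝ)) ∈ coneLattice P ∧
    ∀ h : ((η → ℝ) × ℝ) →ₗ[ℝ] ℝ, IsFacetForm P h → IsReducedForm P h → h (v, (δ : ℝ)) = 1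

/-- A polytope is Gorenstein if it is `δ`-Gorenstein for some positive integer `δ`. -/
def IsGorenstein {η : Type*} (P : Set (η → ℝ)) : Prop :=
  ∃ δ : ℕ, 0 < δ ∧ IsDeltaGorenstein P δ

/-! ### Graphic matroids of simple graphs and their polytopes -/

/-- An independent set of the graphic matroid of `G`: a set of edges forming a forest. -/
def IsGraphicIndep {V : Type*} (G : SimpleGraph V) (I : Set (Sym2 V)) : Prop :=
  I ⊆ G.edgeSet ∧ (SimpleGraph.fromEdgeSet I).IsAcyclic

/-- A basis of the graphic matroid of `G`: a maximal forest (spanning forest). -/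
def IsGraphicBasis {V : Type*} (G : SimpleGraph V) (B : Set (Sym2 V)) : Prop :=
  IsGraphicIndep G B ∧ ∀ e ∈ G.edgeSet, e ∉ B → ¬ IsGraphicIndep G (insert e B)

/-- The base polytope `B(M(G))` of the graphic matroid of `G`: the convex hull of the
indicator vectors of the bases. -/
def basePolytope {V : Type*} (G : SimpleGraph V) : Set (Sym2 V → ℝ) :=
  convexHull ℝ {x | ∃ B : Set (Sym2 V), IsGraphicBasis G B ∧
    x = B.indicator fun _ => (1 : ℝ)}

/-- The base polytope `B(M(G))`, regarded inside `ℝ^E` where `E` is the edge set of `G`. -/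
def basePolytopeE {V : Type*} (G : SimpleGraph V) : Set (↥G.edgeSet → ℝ) :=
  convexHull ℝ {x | ∃ B : Set (Sym2 V), IsGraphicBasis G B ∧
    x = (Subtype.val ⁻¹' B).indicator fun _ => (1 : ℝ)}

/-- A homogeneous inequality `g x ≥ 0` is valid for `P` and defines a facet (a supporting
hyperplane whose intersection with `P` has affine dimension one less than `P`). -/
def IsSupportingFaceIneq {α : Type*} (P : Set (α → ℝ)) (g : (α → ℝ) → ℝ) : Prop :=
  (∀ x ∈ P, 0 ≤ g x) ∧
  Module.finrank ℝ (vectorSpan ℝ {x ∈ P | g x = 0}) + 1 =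
    Module.finrank ℝ (vectorSpan ℝ P)

/-! ### Multigraphs -/

/-- A finite undirected loopless multigraph on a vertex type `V` with edge type `E`. -/
structure Multigraph (V E : Type*) where
  ends : E → Sym2 V
  loopless : ∀ e, ¬ (ends e).IsDiag

/-- The underlying simple graph of a multigraph. -/
def Multigraph.toSimple {V E : Type*} (G : Multigraph V E) : SimpleGraph V :=
  SimpleGraph.fromEdgeSet (Set.range G.ends)

/-- `E(S)` for a multigraph: the set of edges with both endpoints in `S`. -/
def Multigraph.edgesIn {V E : Type*} (G : Multigraph V E) (S : Set V) : Set E :=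
  {e | ∀ v ∈ G.ends e, v ∈ S}

/-- A set of edges of a multigraph is a forest (an independent set of the graphic matroid):
no two parallel edges and no cycle. -/
def IsMultiForest {V E : Type*} (G : Multigraph V E) (I : Set E) : Prop :=
  Set.InjOn G.ends I ∧ (SimpleGraph.fromEdgeSet (G.ends '' I)).IsAcyclic

/-- The independence polytope `P(M(G))` of the graphic matroid of a multigraph `G`. -/
def multiIndepPolytope {V E : Type*} (G : Multigraph V E) : Set (E → ℝ) :=
  convexHull ℝ {x | ∃ I : Set E, IsMultiForest G I ∧ x = I.indicator fun _ => (1 : ℝ)}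

/-- The rank of a set of edges in the graphic matroid of a multigraph. -/
noncomputable def mrank {V E : Type*} (G : Multigraph V E) (A : Set E) : ℕ :=
  sSup {n | ∃ I ⊆ A, IsMultiForest G I ∧ I.ncard = n}

/-- A flat of the graphic matroid of a multigraph: adding any further edge increases the rank. -/
def IsGraphicFlat {V E : Type*} (G : Multigraph V E) (A : Set E) : Prop :=
  ∀ e : E, e ∉ A → mrank G (insert e A) ≠ mrank G A

/-- A circuit of the graphic matroid of a multigraph: a minimal dependent set of edges. -/
def IsMultiCircuit {V E : Type*} (G : Multigraph V E) (C : Set E) : Prop :=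
  ¬ IsMultiForest G C ∧ ∀ C' ⊂ C, IsMultiForest G C'

/-- The restriction of the graphic matroid of `G` to `A` is a connected matroid:
`A` is nonempty and any two distinct elements of `A` lie on a common circuit inside `A`. -/
def ConnectedRestriction {V E : Type*} (G : Multigraph V E) (A : Set E) : Prop :=
  A.Nonempty ∧ ∀ e ∈ A, ∀ f ∈ A, e ≠ f → ∃ C ⊆ A, IsMultiCircuit G C ∧ e ∈ C ∧ f ∈ C

/-- `G` is the `m`-blow-up of the simple graph `H`: every edge of `H` is replaced by exactly
`m` parallel edges and there are no other edges. -/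
def IsBlowUp {V E : Type*} (G : Multigraph V E) (m : ℕ) (H : SimpleGraph V) : Prop :=
  (∀ p ∈ H.edgeSet, {e : E | G.ends e = p}.ncard = m) ∧
  ∀ p : Sym2 V, p ∉ H.edgeSet → {e : E | G.ends e = p} = ∅

/-- The condition `(♣)_δ`: `(δ-1)|E(S)| + 1 = δ(|S|-1)` for every vertex subset `S` inducing a
`2`-connected subgraph. -/
def ClubCond {V : Type*} (H : SimpleGraph V) (δ : ℕ) : Prop :=
  ∀ S : Set V, IsTwoConnected (H.induce S) →
    (δ - 1) * (edgesIn H S).ncard + 1 = δ * (S.ncard - 1)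

/-! ### Chordality, `K₄` minors, cycle attachments -/

/-- A chordless cycle: a cycle such that every edge of `G` between vertices of the cycle is an
edge of the cycle. -/
def IsChordlessCycle {V : Type*} (G : SimpleGraph V) {v : V} (c : G.Walk v v) : Prop :=
  c.IsCycle ∧ ∀ e ∈ edgesIn G {u : V | u ∈ c.support}, e ∈ c.edges

/-- `G` is `δ`-chordal: every cycle without a chord has exactly `δ + 1` edges. -/
def IsDeltaChordal {V : Type*} (G : SimpleGraph V) (δ : ℕ) : Prop :=
  ∀ (v : V) (c : G.Walk v v), IsChordlessCycle G c → c.length = δ + 1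

/-- `G` has a `K₄` minor: there are four disjoint nonempty connected branch sets pairwise
joined by an edge. -/
def HasK4Minor {V : Type*} (G : SimpleGraph V) : Prop :=
  ∃ B : Fin 4 → Set V, (∀ i, (B i).Nonempty) ∧ (∀ i, (G.induce (B i)).Connected) ∧
    (Pairwise fun i j => Disjoint (B i) (B j)) ∧
    (Pairwise fun i j => ∃ u ∈ B i, ∃ v ∈ B j, G.Adj u v)

/-- One step of attaching a new `(δ+1)`-cycle to an edge: `B` is obtained from `A` by adding
`δ - 1` new vertices forming a path of length `δ` between the endpoints of an edge of
`H[A]`, these being all new edges. -/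
def AttachStep {V : Type*} (H : SimpleGraph V) (δ : ℕ) (A B : Set V) : Prop :=
  ∃ q : Fin (δ + 1) → V, Function.Injective q ∧
    H.Adj (q 0) (q (Fin.last δ)) ∧ q 0 ∈ A ∧ q (Fin.last δ) ∈ A ∧
    (∀ i : Fin (δ + 1), i ≠ 0 → i ≠ Fin.last δ → q i ∉ A) ∧
    B = A ∪ {x | ∃ i : Fin (δ + 1), i ≠ 0 ∧ i ≠ Fin.last δ ∧ q i = x} ∧
    edgesIn H B = edgesIn H A ∪ {e | ∃ i : Fin δ, e = s(q i.castSucc, q i.succ)}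

/-- `H` can be constructed from the clique `K₂` by repeatedly attaching new `(δ+1)`-cycles to
edges of the preceding graph. -/
def ConstructibleFromK2 {V : Type*} (H : SimpleGraph V) (δ : ℕ) : Prop :=
  ∃ (k : ℕ) (S : Fin (k + 1) → Set V),
    (∃ u v : V, H.Adj u v ∧ S 0 = {u, v}) ∧
    S (Fin.last k) = Set.univ ∧
    ∀ i : Fin k, AttachStep H δ (S i.castSucc) (S i.succ)

/-! ### Gluings, subdivisions, collisions, ears -/

/-- `G` (with distinguished edge `ab`) is the gluing of the graphs `Gs i` along the edges
`es i`: the disjoint union with all the edges `es i` identified to the single edge `ab`. -/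
def IsGluing {ι : Type*} {Vf : ι → Type*} {W : Type*} (Gs : ∀ i, SimpleGraph (Vf i))
    (es : ∀ i, Sym2 (Vf i)) (G : SimpleGraph W) (a b : W) : Prop :=
  a ≠ b ∧ G.Adj a b ∧
  ∃ φ : ∀ i, Vf i → W,
    (∀ i, Function.Injective (φ i)) ∧
    (∀ x : W, ∃ i, x ∈ Set.range (φ i)) ∧
    (∀ i, Sym2.map (φ i) (es i) = s(a, b)) ∧
    (∀ i j, i ≠ j → Set.range (φ i) ∩ Set.range (φ j) = {a, b}) ∧
    ∀ x y : W, G.Adj x y ↔ ∃ i, ∃ u v, (Gs i).Adj u v ∧ φ i u = x ∧ φ i v = y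

/-- `G'` together with the path `q` is the subdivision of `G` obtained by replacing the edge
`uv` by a path of `m` edges `q 0, …, q m` through new vertices. -/
def IsSubdivisionAt {V W : Type*} (G : SimpleGraph V) (u v : V) {m : ℕ}
    (G' : SimpleGraph W) (q : Fin (m + 1) → W) : Prop :=
  ∃ φ : V → W, Function.Injective φ ∧ Function.Injective q ∧
    q 0 = φ u ∧ q (Fin.last m) = φ v ∧
    (∀ i : Fin (m + 1), i ≠ 0 → i ≠ Fin.last m → q i ∉ Set.range φ) ∧
    (∀ x : W, x ∈ Set.range φ ∨ x ∈ Set.range q) ∧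
    ∀ x y : W, G'.Adj x y ↔
      ((∃ a b : V, G.Adj a b ∧ s(a, b) ≠ s(u, v) ∧ φ a = x ∧ φ b = y) ∨
       ∃ i : Fin m, s(x, y) = s(q i.castSucc, q i.succ))

/-- `G` (with the distinguished nonadjacent pair `a b`) is the collision of `G₁` and `G₂` on
the edges `e₁, e₂`: the disjoint union with `e₁` and `e₂` identified and then deleted. -/
def IsCollision {V₁ V₂ W : Type*} (G₁ : SimpleGraph V₁) (G₂ : SimpleGraph V₂)
    (e₁ : Sym2 V₁) (e₂ : Sym2 V₂) (G : SimpleGraph W) (a b : W) : Prop :=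
  a ≠ b ∧ ¬ G.Adj a b ∧
  ∃ (φ₁ : V₁ → W) (φ₂ : V₂ → W),
    Function.Injective φ₁ ∧ Function.Injective φ₂ ∧
    Sym2.map φ₁ e₁ = s(a, b) ∧ Sym2.map φ₂ e₂ = s(a, b) ∧
    (∀ x : W, x ∈ Set.range φ₁ ∨ x ∈ Set.range φ₂) ∧
    Set.range φ₁ ∩ Set.range φ₂ = {a, b} ∧
    ∀ x y : W, G.Adj x y ↔
      ((∃ u v, G₁.Adj u v ∧ s(u, v) ≠ e₁ ∧ φ₁ u = x ∧ φ₁ v = y) ∨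
       (∃ u v, G₂.Adj u v ∧ s(u, v) ≠ e₂ ∧ φ₂ u = x ∧ φ₂ v = y))

/-- The inner vertices of an ear. -/
def earInner {V : Type*} {s : ℕ} (p : Fin (s + 1) → V) : Set V :=
  {x | ∃ i : Fin (s + 1), i ≠ 0 ∧ i ≠ Fin.last s ∧ p i = x}

/-- The edges of an ear. -/
def earEdges {V : Type*} {s : ℕ} (p : Fin (s + 1) → V) : Set (Sym2 V) :=
  {e | ∃ i : Fin s, e = s(p i.castSucc, p i.succ)}

/-- An `s`-ear of `G`: a path with `s` edges whose inner vertices have degree `2` in `G`. -/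
def IsEar {V : Type*} (G : SimpleGraph V) {s : ℕ} (p : Fin (s + 1) → V) : Prop :=
  Function.Injective p ∧ (∀ i : Fin s, G.Adj (p i.castSucc) (p i.succ)) ∧
  ∀ i : Fin (s + 1), i ≠ 0 → i ≠ Fin.last s → (G.neighborSet (p i)).ncard = 2

/-- `T` is the vertex set of an inclusion-maximal proper `2`-connected induced subgraph. -/
def IsMaxProperTwoConnected {V : Type*} (G : SimpleGraph V) (T : Set V) : Prop :=
  IsTwoConnected (G.induce T) ∧ T ≠ Set.univ ∧
  ∀ T' : Set V, T ⊆ T' → T' ≠ Set.univ → IsTwoConnected (G.induce T') → T' = T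

/-! ### `(♠)₂` and `3`-connectivity -/

/-- A `2`-connected graph satisfies the equalities `(♠)₂`:
`|E| = 2(|V|-1)` and `|E(S)| = 2|S| - 3` for every good flat `S`. -/
def Spade2 {V : Type*} (G : SimpleGraph V) : Prop :=
  IsTwoConnected G ∧ G.edgeSet.ncard = 2 * (Nat.card V - 1) ∧
  ∀ S : Set V, IsGoodFlat G S → (edgesIn G S).ncard = 2 * S.ncard - 3

/-- A graph is `3`-connected if it has more than `3` vertices and remains connected after
deletion of any two vertices. -/
def IsThreeConnected {V : Type*} (G : SimpleGraph V) : Prop :=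
  3 < Nat.card V ∧ ∀ u v : V, (G.induce {x : V | x ≠ u ∧ x ≠ v}).Connected

/-! ### Inductive constructions -/

/-- Graphs obtainable from the `δ`-cycle by gluings (Proposition `construction1`) and
`(δ-1)`-subdivisions (Proposition `construction2`). -/
inductive Obtainable (δ : ℕ) : {W : Type} → SimpleGraph W → Prop
  | cycle {W : Type} (G : SimpleGraph W) (e : G ≃g SimpleGraph.cycleGraph δ) :
      Obtainable δ G
  | glue {Vf : Fin (δ - 1) → Type} {W : Type}
      (Gs : ∀ i, SimpleGraph (Vf i)) (ws : ∀ i, Sym2 (Vf i) → ℕ) (es : ∀ i, Sym2 (Vf i))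
      (G : SimpleGraph W) (a b : W)
      (hob : ∀ i, Obtainable δ (Gs i))
      (hsp : ∀ i, SatisfiesSpade (Gs i) δ (ws i))
      (hes : ∀ i, es i ∈ (Gs i).edgeSet)
      (hwe : ∀ i, ws i (es i) = δ - 1)
      (hgl : IsGluing Gs es G a b) : Obtainable δ G
  | subdivide {V W : Type} (G : SimpleGraph V) (w : Sym2 V → ℕ) (u v : V)
      (G' : SimpleGraph W) (q : Fin (δ - 1 + 1) → W)
      (hob : Obtainable δ G) (hsp : SatisfiesSpade G δ w)
      (huv : G.Adj u v) (hw1 : w s(u, v) = 1)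
      (hsub : IsSubdivisionAt G u v G' q) : Obtainable δ G'

/-- Graphs obtainable from the clique `K₄` by a finite sequence of collisions. -/
inductive ObtainableK4 : {W : Type} → SimpleGraph W → Prop
  | k4 {W : Type} (G : SimpleGraph W) (e : G ≃g (⊤ : SimpleGraph (Fin 4))) :
      ObtainableK4 G
  | collide {V₁ V₂ W : Type} (G₁ : SimpleGraph V₁) (G₂ : SimpleGraph V₂)
      (e₁ : Sym2 V₁) (e₂ : Sym2 V₂) (G : SimpleGraph W) (a b : W)
      (h₁ : ObtainableK4 G₁) (h₂ : ObtainableK4 G₂)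
      (he₁ : e₁ ∈ G₁.edgeSet) (he₂ : e₂ ∈ G₂.edgeSet)
      (hc : IsCollision G₁ G₂ e₁ e₂ G a b) : ObtainableK4 G

/-! ### Connectivity through cuts -/

/-- Cut form of connectivity: `H` restricted to the vertex set `X` is connected. That is, `X` is
nonempty and every nonempty proper subset `Y` of `X` is left by an edge of `H` inside `X`. -/
def ConnOn {V : Type*} (H : SimpleGraph V) (X : Set V) : Prop :=
  X.Nonempty ∧ ∀ Y ⊆ X, Y.Nonempty → Y ≠ X → ∃ y ∈ Y, ∃ z ∈ X \ Y, H.Adj y z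

/-- Cut form of `2`-connectivity of the subgraph induced on `X`. -/
def BiconnOn {V : Type*} (H : SimpleGraph V) (X : Set V) : Prop :=
  ConnOn H X ∧ ∀ v ∈ X, ConnOn H (X \ {v})

section Connectivity

variable {V : Type*} {H K : SimpleGraph V} {X Y Z S : Set V}

lemma ConnOn.mono (h : ConnOn H X) (hHK : H ≤ K) : ConnOn K X :=
  ⟨h.1, fun Y hY hne hp => by
    obtain ⟨y, hy, z, hz, hyz⟩ := h.2 Y hY hne hp
    exact ⟨y, hy, z, hz, hHK hyz⟩⟩

/-- To check connectivity it suffices to consider cuts avoiding a chosen base vertex. -/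
lemma connOn_of_base {x : V} (hx : x ∈ X)
    (h : ∀ Y ⊆ X, Y.Nonempty → x ∉ Y → ∃ y ∈ Y, ∃ z ∈ X \ Y, H.Adj y z) : ConnOn H X := by
  refine ⟨⟨x, hx⟩, fun Y hY hne hp => ?_⟩
  by_cases hxY : x ∈ Y
  · obtain ⟨w, hw, hwY⟩ := Set.exists_of_ssubset (hY.ssubset_of_ne hp)
    obtain ⟨y, hy, z, hz, hyz⟩ := h (X \ Y) Set.sdiff_subset ⟨w, hw, hwY⟩ (fun hh => hh.2 hxY)
    refine ⟨z, ?_, y, hy, hyz.symm⟩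
    by_contra hzY
    exact hz.2 ⟨hz.1, hzY⟩
  · exact h Y hY hne hxY

lemma connOn_singleton (x : V) : ConnOn H {x} :=
  connOn_of_base (Set.mem_singleton x) fun Y hY hne hx => by
    obtain ⟨y, hy⟩ := hne
    have : y = x := hY hy
    exact absurd (this ▸ hy) hx

lemma ConnOn.insert {y z : V} (h : ConnOn H X) (hy : y ∈ X) (hyz : H.Adj y z) :
    ConnOn H (insert z X) := by
  refine connOn_of_base (Set.mem_insert_of_mem z hy) fun Y hY hne hyY => ?_
  by_cases hzY : z ∈ Y
  · exact ⟨z, hzY, y, ⟨Set.mem_insert_of_mem z hy, hyY⟩, hyz.symm⟩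
  · have hYX : Y ⊆ X := fun w hw => (hY hw).resolve_left (fun hh => hzY (hh ▸ hw))
    obtain ⟨a, ha, b, hb, hab⟩ := h.2 Y hYX hne (fun hh => hyY (hh ▸ hy))
    exact ⟨a, ha, b, ⟨Set.mem_insert_of_mem z hb.1, hb.2⟩, hab⟩

lemma ConnOn.union_edge {y z : V} (h : ConnOn H X) (h' : ConnOn H Z) (hy : y ∈ X) (hz : z ∈ Z)
    (hyz : H.Adj y z) : ConnOn H (X ∪ Z) := by
  refine connOn_of_base (Or.inl hy) fun Y hY hne hyY => ?_
  by_cases hYX : (Y ∩ X).Nonempty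
  · obtain ⟨a, ha, b, hb, hab⟩ := h.2 (Y ∩ X) Set.inter_subset_right hYX
      (fun hh => hyY (hh.symm.subset hy).1)
    exact ⟨a, ha.1, b, ⟨Or.inl hb.1, fun hbY => hb.2 ⟨hbY, hb.1⟩⟩, hab⟩
  · have hYZ : Y ⊆ Z := fun w hw => (hY hw).resolve_left fun hh => hYX ⟨w, hw, hh⟩
    by_cases hzY : z ∈ Y
    · exact ⟨z, hzY, y, ⟨Or.inl hy, hyY⟩, hyz.symm⟩
    · obtain ⟨a, ha, b, hb, hab⟩ := h'.2 Y hYZ hne (fun hh => hzY (hh ▸ hz))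
      exact ⟨a, ha, b, ⟨Or.inr hb.1, hb.2⟩, hab⟩

lemma connected_iff_connOn : H.Connected ↔ ConnOn H Set.univ := by
  constructor
  · intro h
    obtain ⟨x⟩ := h.nonempty
    refine connOn_of_base (Set.mem_univ x) fun Y _ hne hxY => ?_
    obtain ⟨y, hy⟩ := hne
    obtain ⟨p⟩ := h.preconnected y x
    obtain ⟨d, -, h1, h2⟩ := p.exists_boundary_dart Y hy hxY
    exact ⟨d.fst, h1, d.snd, ⟨trivial, h2⟩, d.adj⟩
  · intro h
    have : Nonempty V := ⟨h.1.some⟩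
    refine ⟨fun x y => ?_⟩
    by_contra hxy
    obtain ⟨a, ha, b, hb, hab⟩ := h.2 {z | H.Reachable x z} (Set.subset_univ _)
      ⟨x, Reachable.refl x⟩ (fun hh => hxy (by
        have : y ∈ {z | H.Reachable x z} := hh ▸ trivial
        exact this))
    exact hb.2 (Reachable.trans ha hab.reachable)

lemma connOn_induce_iff {Y : Set S} :
    ConnOn (H.induce S) Y ↔ ConnOn H (Subtype.val '' Y) := by
  constructor
  · intro h
    refine ⟨h.1.image _, fun Q hQ hne hp => ?_⟩
    obtain ⟨a, ha, b, hb, hab⟩ := h.2 (Subtype.val ⁻¹' Q)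
      (fun w hw => by
        obtain ⟨w', hw', he⟩ := hQ hw
        exact Subtype.ext he ▸ hw')
      (by
        obtain ⟨q, hq⟩ := hne
        obtain ⟨w', hw', he⟩ := hQ hq
        exact ⟨w', by simpa [he] using hq⟩)
      (by
        rintro rfl
        refine hp (Set.Subset.antisymm hQ ?_)
        rintro _ ⟨w, hw, rfl⟩
        exact hw)
    exact ⟨a, ha, b, ⟨⟨b, hb.1, rfl⟩, hb.2⟩, hab⟩
  · intro h
    refine ⟨by simpa using h.1, fun Q hQ hne hp => ?_⟩
    obtain ⟨a, ha, b, hb, hab⟩ := h.2 (Subtype.val '' Q) (Set.image_mono hQ) (hne.image _)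
      (fun hh => hp (Subtype.val_injective.image_injective hh))
    obtain ⟨a', ha', rfl⟩ := ha
    obtain ⟨b', hb', rfl⟩ := hb.1
    exact ⟨a', ha', b', ⟨hb', fun hQ' => hb.2 ⟨b', hQ', rfl⟩⟩, hab⟩

lemma connected_induce_iff : (H.induce S).Connected ↔ ConnOn H S := by
  rw [connected_iff_connOn, connOn_induce_iff, Set.image_univ, Subtype.range_coe]

lemma isTwoConnected_iff : IsTwoConnected H ↔ ConnOn H Set.univ ∧ ∀ v, ConnOn H {v}ᶜ := by
  unfold IsTwoConnected
  rw [connected_iff_connOn]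
  refine and_congr_right fun _ => forall_congr' fun v => ?_
  rw [connected_induce_iff]
  rfl

lemma isTwoConnected_iff_biconnOn : IsTwoConnected H ↔ BiconnOn H Set.univ := by
  rw [isTwoConnected_iff]
  simp [BiconnOn, Set.compl_eq_univ_sdiff]

lemma isTwoConnected_induce_iff : IsTwoConnected (H.induce S) ↔ BiconnOn H S := by
  rw [isTwoConnected_iff, connOn_induce_iff, Set.image_univ, Subtype.range_coe]
  refine and_congr_right fun _ => ?_
  simp only [connOn_induce_iff, Subtype.forall]
  refine forall₂_congr fun v hv => ?_
  have : (Subtype.val '' ({⟨v, hv⟩}ᶜ : Set S)) = S \ {v} := by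
    ext w
    simp
  rw [this]

lemma BiconnOn.two_le [Finite V] (h : BiconnOn H X) : 2 ≤ X.ncard := by
  obtain ⟨x, hx⟩ := h.1.1
  obtain ⟨y, hy, hyx⟩ := (h.2 x hx).1
  rw [← Set.ncard_pair (fun hh : x = y => hyx hh.symm)]
  exact Set.ncard_le_ncard (by rintro w (rfl | rfl) <;> assumption)

/-- Connected components in cut form: every `z ∈ Z` lies in a set `C ⊆ Z` on which `H` is
connected and which no edge of `H` joins to the rest of `Z`. -/
lemma exists_component (H : SimpleGraph V) {z : V} (hz : z ∈ Z) :
    ∃ C ⊆ Z, z ∈ C ∧ ConnOn H C ∧ ∀ a ∈ C, ∀ b ∈ Z, H.Adj a b → b ∈ C := by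
  -- the smallest subset of `Z` containing `z` and closed under adjacency inside `Z`
  set 𝒞 : Set (Set V) := {D | D ⊆ Z ∧ z ∈ D ∧ ∀ a ∈ D, ∀ b ∈ Z, H.Adj a b → b ∈ D} with h𝒞
  have hZ : Z ∈ 𝒞 := ⟨subset_rfl, hz, fun _ _ b hb _ => hb⟩
  have hI : ⋂₀ 𝒞 ∈ 𝒞 :=
    ⟨Set.sInter_subset_of_mem hZ, fun D hD => hD.2.1,
      fun a ha b hb hab D hD => hD.2.2 a (ha D hD) b hb hab⟩
  refine ⟨⋂₀ 𝒞, hI.1, hI.2.1, connOn_of_base hI.2.1 fun Y hY hne hzY => ?_, hI.2.2⟩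
  by_contra! hno
  have : ⋂₀ 𝒞 \ Y ∈ 𝒞 := by
    refine ⟨Set.sdiff_subset.trans hI.1, ⟨hI.2.1, hzY⟩, fun a ha b hb hab => ?_⟩
    have hbC := hI.2.2 a ha.1 b hb hab
    exact ⟨hbC, fun hbY => hno b hbY a ha hab.symm⟩
  obtain ⟨y, hy⟩ := hne
  exact (Set.sInter_subset_of_mem this (hY hy)).2 hy

/-- Enlarging a biconnected set by components of its complement keeps it biconnected. -/
lemma BiconnOn.union_closed (hG : BiconnOn H Set.univ) (hX : BiconnOn H X) (hXZ : X ⊆ Z)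
    (hcl : ∀ a ∈ Z \ X, ∀ b, H.Adj a b → b ∈ Z) : BiconnOn H Z := by
  -- both parts of the definition at once: `W` is empty or a single deleted vertex
  have key : ∀ W : Set V, ConnOn H (X \ W) → ConnOn H Wᶜ → ConnOn H (Z \ W) := by
    intro W hXW hW
    obtain ⟨x, hx⟩ := hXW.1
    refine connOn_of_base (x := x) ⟨hXZ hx.1, hx.2⟩ fun Y hY hne hxY => ?_
    by_cases hYX : (Y ∩ X).Nonempty
    · obtain ⟨a, ha, b, hb, hab⟩ := hXW.2 (Y ∩ X) (fun w hw => ⟨hw.2, (hY hw.1).2⟩) hYX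
        (fun hh => hxY ((hh ▸ hx : x ∈ Y ∩ X)).1)
      exact ⟨a, ha.1, b, ⟨⟨hXZ hb.1.1, hb.1.2⟩, fun hbY => hb.2 ⟨hbY, hb.1.1⟩⟩, hab⟩
    · obtain ⟨a, ha, b, hb, hab⟩ := hW.2 Y (fun w hw => (hY hw).2) hne
        (fun hh => hxY (hh ▸ hx.2))
      exact ⟨a, ha, b, ⟨⟨hcl a ⟨(hY ha).1, fun haX => hYX ⟨a, ha, haX⟩⟩ b hab, hb.1⟩, hb.2⟩, hab⟩
  refine ⟨by simpa using key ∅ (by simpa using hX.1) (by simpa using hG.1), fun v hv => ?_⟩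
  refine key {v} ?_ (by simpa [Set.compl_eq_univ_sdiff] using hG.2 v trivial)
  by_cases hvX : v ∈ X
  · exact hX.2 v hvX
  · rw [Set.sdiff_singleton_eq_self hvX]
    exact hX.1

/-- A connected set with a cut vertex `u` splits into two connected sets meeting in `u`. -/
lemma exists_split {u : V} (hX : ConnOn H X) (hu : u ∈ X) (hne : (X \ {u}).Nonempty)
    (hcut : ¬ ConnOn H (X \ {u})) :
    ∃ A B : Set V, A ∪ B = X ∧ A ∩ B = {u} ∧ A ≠ X ∧ B ≠ X ∧ A ≠ {u} ∧ ConnOn H A ∧ ConnOn H B ∧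
      ∀ a ∈ A \ B, ∀ b ∈ B \ A, ¬ H.Adj a b := by
  have hex : ∃ Y ⊆ X \ {u}, Y.Nonempty ∧ Y ≠ X \ {u} ∧
      ∀ y ∈ Y, ∀ z ∈ (X \ {u}) \ Y, ¬ H.Adj y z := by
    by_contra! hno
    exact hcut ⟨hne, fun Y hY h1 h2 => hno Y hY h1 h2⟩
  obtain ⟨Y, hY, hYne, hYp, hYc⟩ := hex
  have key : ∀ Q ⊆ X \ {u}, (∀ y ∈ Q, ∀ z ∈ (X \ {u}) \ Q, ¬ H.Adj y z) →
      ConnOn H (insert u Q) := by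
    intro Q hQ hQc
    refine connOn_of_base (Set.mem_insert u Q) fun D hD hDne huD => ?_
    have hDQ : D ⊆ Q := fun w hw => (hD hw).resolve_left fun hh => huD (hh ▸ hw)
    obtain ⟨a, ha, b, hb, hab⟩ := hX.2 D (fun w hw => (hQ (hDQ hw)).1) hDne
      (fun hh => huD (hh ▸ hu))
    refine ⟨a, ha, b, ⟨?_, hb.2⟩, hab⟩
    by_contra hbQ
    simp only [Set.mem_insert_iff, not_or] at hbQ
    exact hQc a (hDQ ha) b ⟨⟨hb.1, hbQ.1⟩, hbQ.2⟩ hab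
  obtain ⟨w, hw, hwY⟩ := Set.exists_of_ssubset (hY.ssubset_of_ne hYp)
  obtain ⟨y, hy⟩ := hYne
  have huY : u ∉ Y := fun hh => (hY hh).2 rfl
  refine ⟨insert u Y, insert u ((X \ {u}) \ Y), ?_, ?_, ?_, ?_, ?_, key _ hY hYc,
    key _ Set.sdiff_subset ?_, ?_⟩
  · ext v
    have := @hY v
    by_cases hvu : v = u
    · simp [hvu, hu]
    · simp only [Set.mem_union, Set.mem_insert_iff, hvu, Set.mem_sdiff, Set.mem_singleton_iff,
        false_or] at *
      tauto
  · ext v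
    by_cases hvu : v = u
    · simp [hvu]
    · simp only [Set.mem_inter_iff, Set.mem_insert_iff, hvu, Set.mem_sdiff, Set.mem_singleton_iff,
        false_or, iff_false]
      tauto
  · intro hh
    have : w ∈ insert u Y := hh.symm.subset hw.1
    exact this.elim hw.2 hwY
  · intro hh
    have : y ∈ insert u ((X \ {u}) \ Y) := hh.symm.subset (hY hy).1
    exact this.elim (hY hy).2 fun h => h.2 hy
  · intro hh
    have : y ∈ ({u} : Set V) := hh ▸ Set.mem_insert_of_mem u hy
    exact (hY hy).2 this
  · intro a ha b hb hab
    have hbY : b ∈ Y := by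
      by_contra h
      exact hb.2 ⟨hb.1, h⟩
    exact hYc b hbY a ha hab.symm
  · rintro a ⟨ha, ha'⟩ b ⟨hb, hb'⟩ hab
    simp only [Set.mem_insert_iff, not_or] at ha ha' hb hb'
    exact hYc a (ha.resolve_left ha'.1) b (hb.resolve_left hb'.1) hab

end Connectivity

/-! ### Spanning trees of vertex sets -/

section Trees

variable {V : Type*} {G H K : SimpleGraph V} {X Y Z S : Set V} {B : Set (Sym2 V)}

@[simp] lemma mk_mem_edgesIn {a b : V} : s(a, b) ∈ edgesIn G X ↔ G.Adj a b ∧ a ∈ X ∧ b ∈ X := by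
  simp [edgesIn]

lemma edgesIn_univ : edgesIn G Set.univ = G.edgeSet := by
  ext e
  simp [edgesIn]

lemma edgesIn_mono (h : X ⊆ Y) : edgesIn G X ⊆ edgesIn G Y :=
  fun _ he => ⟨he.1, fun v hv => h (he.2 v hv)⟩

lemma edgesIn_subset : edgesIn G X ⊆ G.edgeSet := fun _ he => he.1

lemma edgesIn_singleton (x : V) : edgesIn G {x} = ∅ := by
  ext e
  induction e with
  | _ a b =>
    simp only [mk_mem_edgesIn, Set.mem_singleton_iff, Set.mem_empty_iff_false, iff_false]
    rintro ⟨h, rfl, rfl⟩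
    exact h.ne rfl

/-- The vertex set `X` is connected by a set of edges `F` that keep `Y ⊆ X` free: `F` consists of
`|X| - |Y|` edges inside `X`, none inside `Y`, which turn any connection of `Y` into a connection
of `X`. This grows spanning trees outwards from `Y`. -/
lemma exists_grow [Finite V] (hX : ConnOn H X) (hY : Y ⊆ X) (hne : Y.Nonempty) :
    ∃ F ⊆ edgesIn H X, Disjoint F (edgesIn H Y) ∧ F.ncard + Y.ncard = X.ncard ∧
      ∀ K : SimpleGraph V, (∀ a b, s(a, b) ∈ F → K.Adj a b) → ConnOn K Y → ConnOn K X := by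
  induction hn : (X \ Y).ncard using Nat.strong_induction_on generalizing Y with
  | _ n ih =>
    by_cases hp : Y = X
    · subst hp
      exact ⟨∅, Set.empty_subset _, Set.empty_disjoint _, by simp, fun K _ h => h⟩
    · obtain ⟨y, hy, z, hz, hyz⟩ := hX.2 Y hY hne hp
      have hlt : (X \ insert z Y).ncard < n := by
        rw [← hn]
        refine Set.ncard_lt_ncard ⟨fun w hw => ⟨hw.1, fun h => hw.2 (Or.inr h)⟩, fun hh => ?_⟩
        exact (hh hz).2 (Or.inl rfl)
      obtain ⟨F, hF, hdis, hcard, hconn⟩ := ih _ hlt (Y := insert z Y)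
        (Set.insert_subset hz.1 hY) (Set.insert_nonempty _ _) rfl
      have hyzF : s(y, z) ∉ F := fun h =>
        Set.disjoint_left.mp hdis h (mk_mem_edgesIn.mpr ⟨hyz, Or.inr hy, Or.inl rfl⟩)
      refine ⟨insert s(y, z) F, ?_, ?_, ?_, fun K hK hKY => ?_⟩
      · exact Set.insert_subset (mk_mem_edgesIn.mpr ⟨hyz, hY hy, hz.1⟩) hF
      · rw [Set.disjoint_left]
        rintro e (rfl | he) he'
        · exact hz.2 (mk_mem_edgesIn.mp he').2.2
        · exact Set.disjoint_left.mp hdis he (edgesIn_mono (Set.subset_insert z Y) he')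
      · rw [Set.ncard_insert_of_notMem hyzF]
        rw [Set.ncard_insert_of_notMem hz.2] at hcard
        omega
      · exact hconn K (fun a b hab => hK a b (Or.inr hab))
          (hKY.insert hy (hK y z (Or.inl rfl)))

/-- A connected vertex set `X` spans at least `|X| - 1` edges. -/
lemma ConnOn.card_le [Finite V] (h : ConnOn H X) : X.ncard ≤ (edgesIn H X).ncard + 1 := by
  obtain ⟨x, hx⟩ := h.1
  obtain ⟨F, hF, -, hc, -⟩ := exists_grow h (Set.singleton_subset_iff.mpr hx)
    (Set.singleton_nonempty x)
  have := Set.ncard_le_ncard hF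
  rw [Set.ncard_singleton] at hc
  omega

/-- `B` is the edge set of a spanning tree of the subgraph of `G` induced on `X`. -/
def TreeOn (G : SimpleGraph V) (B : Set (Sym2 V)) (X : Set V) : Prop :=
  B ⊆ edgesIn G X ∧ ConnOn (fromEdgeSet B) X ∧ B.ncard + 1 = X.ncard

lemma fromEdgeSet_adj_of_mem (hB : B ⊆ G.edgeSet) {a b : V} (h : s(a, b) ∈ B) :
    (fromEdgeSet B).Adj a b :=
  (fromEdgeSet_adj B).mpr ⟨h, (mem_edgeSet G |>.mp (hB h)).ne⟩

lemma edgeSet_fromEdgeSet_of_subset (hB : B ⊆ G.edgeSet) : (fromEdgeSet B).edgeSet = B := by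
  rw [edgeSet_fromEdgeSet]
  ext e
  simp only [Set.mem_sdiff, and_iff_left_iff_imp]
  exact fun he => G.not_isDiag_of_mem_edgeSet (hB he)

lemma treeOn_singleton (x : V) : TreeOn G ∅ {x} :=
  ⟨Set.empty_subset _, connOn_singleton x, by simp⟩

/-- A spanning tree of `Y ⊆ X` extends to one of `X` by edges not inside `Y`. -/
lemma TreeOn.exists_extend [Finite V] (hB : TreeOn G B Y) (hX : ConnOn G X) (hY : Y ⊆ X) :
    ∃ F, Disjoint F (edgesIn G Y) ∧ F ⊆ edgesIn G X ∧
      ∀ B', TreeOn G B' Y → TreeOn G (B' ∪ F) X := by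
  obtain ⟨F, hF, hdis, hc, hconn⟩ := exists_grow hX hY hB.2.1.1
  refine ⟨F, hdis, hF, fun B' hB' => ?_⟩
  have hsub : B' ∪ F ⊆ edgesIn G X := Set.union_subset (hB'.1.trans (edgesIn_mono hY)) hF
  refine ⟨hsub, hconn _ (fun a b hab => ?_) (hB'.2.1.mono ?_), ?_⟩
  · exact fromEdgeSet_adj_of_mem (hsub.trans edgesIn_subset) (Or.inr hab)
  · exact fromEdgeSet_mono Set.subset_union_left
  · rw [Set.ncard_union_eq (hdis.mono_right hB'.1).symm]
    have := hB'.2.2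
    omega

lemma ConnOn.exists_treeOn [Finite V] (hX : ConnOn G X) : ∃ B, TreeOn G B X := by
  obtain ⟨x, hx⟩ := hX.1
  obtain ⟨F, -, -, h⟩ := (treeOn_singleton (G := G) x).exists_extend hX
    (Set.singleton_subset_iff.mpr hx)
  exact ⟨_, h _ (treeOn_singleton x)⟩

/-- Two disjoint trees joined by an edge form a tree. -/
lemma TreeOn.join [Finite V] {B' : Set (Sym2 V)} {a b : V} (h : TreeOn G B X) (h' : TreeOn G B' Y)
    (hXY : Disjoint X Y) (ha : a ∈ X) (hb : b ∈ Y) (hab : G.Adj a b) :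
    TreeOn G (insert s(a, b) (B ∪ B')) (X ∪ Y) := by
  have hsub : insert s(a, b) (B ∪ B') ⊆ edgesIn G (X ∪ Y) :=
    Set.insert_subset (mk_mem_edgesIn.mpr ⟨hab, Or.inl ha, Or.inr hb⟩)
      (Set.union_subset (h.1.trans (edgesIn_mono Set.subset_union_left))
        (h'.1.trans (edgesIn_mono Set.subset_union_right)))
  refine ⟨hsub, ConnOn.union_edge (h.2.1.mono ?_) (h'.2.1.mono ?_) ha hb ?_, ?_⟩
  · exact fromEdgeSet_mono (Set.subset_union_left.trans (Set.subset_insert _ _))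
  · exact fromEdgeSet_mono (Set.subset_union_right.trans (Set.subset_insert _ _))
  · exact fromEdgeSet_adj_of_mem (hsub.trans edgesIn_subset) (Or.inl rfl)
  · have hd : Disjoint B B' := by
      rw [Set.disjoint_left]
      intro e he he'
      induction e with
      | _ c d => exact Set.disjoint_left.mp hXY (mk_mem_edgesIn.mp (h.1 he)).2.1
                  (mk_mem_edgesIn.mp (h'.1 he')).2.1
    have hn : s(a, b) ∉ B ∪ B' := by
      rintro (hh | hh)
      · exact Set.disjoint_left.mp hXY (mk_mem_edgesIn.mp (h.1 hh)).2.2 hb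
      · exact Set.disjoint_left.mp hXY ha (mk_mem_edgesIn.mp (h'.1 hh)).2.1
    rw [Set.ncard_insert_of_notMem hn, Set.ncard_union_eq hd, Set.ncard_union_eq hXY]
    have := h.2.2
    have := h'.2.2
    omega

/-- For a connected graph, the bases of the graphic matroid are the spanning trees. -/
lemma isGraphicBasis_iff [Finite V] (hG : ConnOn G Set.univ) :
    IsGraphicBasis G B ↔ TreeOn G B Set.univ := by
  have hcard : ∀ C : Set (Sym2 V), C ⊆ G.edgeSet →
      Nat.card (fromEdgeSet C).edgeSet = C.ncard := fun C hC => by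
    rw [edgeSet_fromEdgeSet_of_subset hC, Nat.card_coe_set_eq]
  unfold TreeOn
  rw [edgesIn_univ, Set.ncard_univ, ← connected_iff_connOn]
  constructor
  · rintro ⟨⟨hB, hac⟩, hmax⟩
    have hconn : (fromEdgeSet B).Connected := by
      rw [connected_iff_connOn]
      have hne : (Set.univ : Set V).Nonempty := hG.1
      obtain ⟨x, hx⟩ := hne
      refine connOn_of_base hx fun Y _ hYne hxY => ?_
      by_contra! hno
      obtain ⟨y, hy, z, hz, hyz⟩ := hG.2 Y (Set.subset_univ _) hYne (fun hh => hxY (hh ▸ hx))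
      have hnr : ¬ (fromEdgeSet B).Reachable y z := by
        rintro ⟨p⟩
        obtain ⟨d, -, h1, h2⟩ := p.exists_boundary_dart Y hy hz.2
        exact hno _ h1 _ ⟨trivial, h2⟩ d.adj
      have hyzB : s(y, z) ∉ B := fun h => hnr (fromEdgeSet_adj_of_mem hB h).reachable
      refine hmax s(y, z) hyz hyzB ⟨Set.insert_subset hyz hB, ?_⟩
      refine ((isAcyclic_add_edge_iff_of_not_reachable y z hnr).mpr hac).anti fun a b hab => ?_
      simp only [sup_adj, edge, fromEdgeSet_adj, Set.mem_insert_iff, Set.mem_singleton_iff] at hab ⊢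
      tauto
    refine ⟨hB, hconn, ?_⟩
    have := (isTree_iff_connected_and_card.mp ⟨hconn, hac⟩).2
    rwa [hcard B hB] at this
  · rintro ⟨hB, hconn, hc⟩
    refine ⟨⟨hB, (isTree_iff_connected_and_card.mpr ⟨hconn, by rwa [hcard B hB]⟩).isAcyclic⟩,
      fun e he heB hI => ?_⟩
    have hc' : (fromEdgeSet (insert e B)).Connected :=
      hconn.mono (fromEdgeSet_mono (Set.subset_insert _ _))
    have := (isTree_iff_connected_and_card.mp ⟨hc', hI.2⟩).2
    rw [hcard _ hI.1, Set.ncard_insert_of_notMem heB] at this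
    omega

/-- A spanning tree has at most `|X| - 1` edges inside a nonempty vertex set `X`: replacing these
edges by a star on `X` leaves a connected graph. -/
lemma TreeOn.card_inter_le [Finite V] (hB : TreeOn G B Set.univ) (hX : X.Nonempty) :
    (B ∩ edgesIn G X).ncard + 1 ≤ X.ncard := by
  obtain ⟨x, hx⟩ := hX
  set St : Set (Sym2 V) := (fun v => s(x, v)) '' (X \ {x}) with hSt
  set C : Set (Sym2 V) := (B \ edgesIn G X) ∪ St with hC
  have hstar : ConnOn (fromEdgeSet C) X := connOn_of_base hx fun Y hY hne hxY => by
    obtain ⟨y, hy⟩ := hne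
    have hyx : y ≠ x := fun hh => hxY (hh ▸ hy)
    refine ⟨y, hy, x, ⟨hx, hxY⟩, ?_⟩
    rw [fromEdgeSet_adj]
    exact ⟨Or.inr ⟨y, ⟨hY hy, hyx⟩, Sym2.eq_swap⟩, hyx⟩
  have hconn : ConnOn (fromEdgeSet C) Set.univ :=
    connOn_of_base (Set.mem_univ x) fun Y _ hne hxY => by
      by_cases hYX : (Y ∩ X).Nonempty
      · obtain ⟨a, ha, b, hb, hab⟩ := hstar.2 (Y ∩ X) Set.inter_subset_right hYX
          (fun hh => hxY (hh.symm.subset hx).1)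
        exact ⟨a, ha.1, b, ⟨trivial, fun hbY => hb.2 ⟨hbY, hb.1⟩⟩, hab⟩
      · obtain ⟨a, ha, b, hb, hab⟩ := hB.2.1.2 Y (Set.subset_univ _) hne
          (fun hh => hxY (hh ▸ trivial))
        refine ⟨a, ha, b, hb, ?_⟩
        rw [fromEdgeSet_adj] at hab ⊢
        exact ⟨Or.inl ⟨hab.1, fun h => hYX ⟨a, ha, (mk_mem_edgesIn.mp h).2.1⟩⟩, hab.2⟩
  have h1 := hconn.card_le
  have h2 : (edgesIn (fromEdgeSet C) Set.univ).ncard ≤ C.ncard :=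
    Set.ncard_le_ncard fun e he => by
      have := he.1
      rw [edgeSet_fromEdgeSet] at this
      exact this.1
  have h3 : C.ncard ≤ (B \ edgesIn G X).ncard + St.ncard := Set.ncard_union_le _ _
  have h4 : St.ncard ≤ (X \ {x}).ncard := Set.ncard_image_le
  have h5 := Set.ncard_sdiff_singleton_add_one hx
  have h6 := Set.ncard_inter_add_ncard_sdiff_eq_ncard B (edgesIn G X)
  have h7 := hB.2.2
  omega

/-- Exchange in a spanning tree: if the edge `yz` is not in the tree `B` and `K` separates `y` from
`z`, some tree edge `f` leaving `K` can be exchanged for `yz`. -/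
lemma TreeOn.exchange [Finite V] (hB : TreeOn G B Set.univ) {y z : V} (hyz : G.Adj y z)
    (hyzB : s(y, z) ∉ B) {K : Set V} (hy : y ∈ K) (hz : z ∉ K) :
    ∃ a ∈ K, ∃ b ∉ K, s(a, b) ∈ B ∧ TreeOn G (insert s(y, z) (B \ {s(a, b)})) Set.univ := by
  classical
  have hBE : B ⊆ G.edgeSet := hB.1.trans edgesIn_subset
  have hconn : (fromEdgeSet B).Connected := connected_iff_connOn.mpr hB.2.1
  obtain ⟨p, hp⟩ := (hconn.preconnected y z).exists_isPath
  obtain ⟨d, hd, h1, h2⟩ := p.exists_boundary_dart K hy hz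
  have hdB : s(d.fst, d.snd) ∈ B := ((fromEdgeSet_adj B).mp d.adj).1
  refine ⟨d.fst, h1, d.snd, h2, hdB, ?_⟩
  have hsub : insert s(y, z) (B \ {s(d.fst, d.snd)}) ⊆ edgesIn G Set.univ := by
    rw [edgesIn_univ]
    exact Set.insert_subset hyz (Set.sdiff_subset.trans hBE)
  refine ⟨hsub, ?_, ?_⟩
  · rw [← connected_iff_connOn]
    have hB' : insert s(y, z) B ⊆ G.edgeSet := Set.insert_subset hyz hBE
    have hle : fromEdgeSet B ≤ fromEdgeSet (insert s(y, z) B) :=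
      fromEdgeSet_mono (Set.subset_insert _ _)
    have hadj : (fromEdgeSet (insert s(y, z) B)).Adj z y :=
      (fromEdgeSet_adj_of_mem hB' (Or.inl rfl)).symm
    -- `f` lies on the cycle closed by `yz`, so it is not a bridge
    have hcyc : (Walk.cons hadj (p.mapLe hle)).IsCycle := by
      rw [Walk.cons_isCycle_iff]
      refine ⟨hp.mapLe hle, fun hmem => hyzB ?_⟩
      rw [Walk.edges_mapLe_eq_edges, Sym2.eq_swap] at hmem
      exact ((fromEdgeSet_adj B).mp (p.adj_of_mem_edges hmem)).1
    have hnb : ¬ (fromEdgeSet (insert s(y, z) B)).IsBridge s(d.fst, d.snd) := by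
      refine fun hbr => hbr.notMem_edges_of_isCycle hcyc ?_
      rw [Walk.edges_cons, Walk.edges_mapLe_eq_edges]
      exact List.mem_cons_of_mem _ (List.mem_map_of_mem hd)
    refine ((hconn.mono hle).connected_delete_edge_of_not_isBridge hnb).mono ?_
    intro a b hab
    simp only [deleteEdges_adj, fromEdgeSet_adj, Set.mem_insert_iff, Set.mem_sdiff,
      Set.mem_singleton_iff] at hab ⊢
    tauto
  · have hn : s(y, z) ∉ B \ {s(d.fst, d.snd)} := fun h => hyzB h.1
    rw [Set.ncard_insert_of_notMem hn, Set.ncard_sdiff_singleton_add_one hdB]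
    exact hB.2.2

end Trees

/-! ### Good flats and edge deletion -/

section GoodFlats

variable {V : Type*} {G H : SimpleGraph V} {X Y Z S : Set V}

lemma ConnOn.reachable (h : ConnOn H X) {x y : V} (hx : x ∈ X) (hy : y ∈ X) :
    H.Reachable x y := by
  by_contra hxy
  obtain ⟨a, ha, b, hb, hab⟩ := h.2 {z ∈ X | H.Reachable x z} (Set.sep_subset _ _)
    ⟨x, hx, Reachable.refl x⟩ (fun hh => hxy (hh.symm.subset hy).2)
  exact hb.2 ⟨hb.1, Reachable.trans ha.2 hab.reachable⟩

lemma ConnOn.fromEdgeSet_edgesIn (h : ConnOn G S) : ConnOn (fromEdgeSet (edgesIn G S)) S :=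
  ⟨h.1, fun Y hY hne hp => by
    obtain ⟨a, ha, b, hb, hab⟩ := h.2 Y hY hne hp
    exact ⟨a, ha, b, hb, fromEdgeSet_adj_of_mem edgesIn_subset
      (mk_mem_edgesIn.mpr ⟨hab, hY ha, hb.1⟩)⟩⟩

/-- Contracting the edges of a connected vertex set `S` identifies exactly the vertices of `S`. -/
lemma mk_eq_mk_iff (hS : ConnOn G S) {u v : V} :
    (fromEdgeSet (edgesIn G S)).connectedComponentMk u =
      (fromEdgeSet (edgesIn G S)).connectedComponentMk v ↔ u = v ∨ (u ∈ S ∧ v ∈ S) := by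
  have key : ∀ {u v : V}, (fromEdgeSet (edgesIn G S)).Reachable u v → u ≠ v → u ∈ S := by
    rintro u v ⟨p⟩ huv
    obtain ⟨d, -, h1, -⟩ := p.exists_boundary_dart {u} rfl (fun h => huv h.symm)
    have := (mk_mem_edgesIn.mp ((fromEdgeSet_adj _).mp d.adj).1).2.1
    rwa [Set.mem_singleton_iff.mp h1] at this
  rw [ConnectedComponent.eq]
  constructor
  · intro h
    by_cases huv : u = v
    · exact Or.inl huv
    · exact Or.inr ⟨key h huv, key h.symm (Ne.symm huv)⟩
  · rintro (rfl | ⟨hu, hv⟩)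
    · exact Reachable.refl u
    · exact hS.fromEdgeSet_edgesIn.reachable hu hv

lemma contractEdges_adj {F : Set (Sym2 V)} {c d : (fromEdgeSet F).ConnectedComponent} :
    (contractEdges G F).Adj c d ↔ c ≠ d ∧ ∃ u v : V, G.Adj u v ∧
      (fromEdgeSet F).connectedComponentMk u = c ∧
      (fromEdgeSet F).connectedComponentMk v = d := by
  rw [contractEdges, fromRel_adj]
  refine and_congr_right fun _ => ⟨?_, Or.inl⟩
  rintro (h | ⟨u, v, h, h1, h2⟩)
  · exact h
  · exact ⟨v, u, h.symm, h2, h1⟩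

lemma connOn_contractEdges {F : Set (Sym2 V)} {Q : Set (fromEdgeSet F).ConnectedComponent}
    (h : ConnOn G ((fromEdgeSet F).connectedComponentMk ⁻¹' Q)) :
    ConnOn (contractEdges G F) Q := by
  obtain ⟨x, hx⟩ := h.1
  refine connOn_of_base hx fun Y hY hne hxY => ?_
  obtain ⟨a, ha, b, hb, hab⟩ := h.2 ((fromEdgeSet F).connectedComponentMk ⁻¹' Y)
    (Set.preimage_mono hY)
    (by
      obtain ⟨c, hc⟩ := hne
      induction c using ConnectedComponent.ind with
      | _ y => exact ⟨y, hc⟩)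
    (fun hh => hxY (hh.symm.subset hx))
  exact ⟨_, ha, _, ⟨hb.1, hb.2⟩,
    contractEdges_adj.mpr ⟨fun hh => hb.2 (hh ▸ ha : _ ∈ Y), a, b, hab, rfl, rfl⟩⟩

/-- In a `2`-connected graph, `S` is a good flat exactly if `G[S]` is `2`-connected and `G - S` is
connected: deleting the contracted vertex of `G/S` gives `G - S`, and deleting any other vertex `u`
gives a contraction of the connected graph `G - u`. -/
lemma isGoodFlat_iff (hG : BiconnOn G Set.univ) :
    IsGoodFlat G S ↔ BiconnOn G S ∧ ConnOn G Sᶜ := by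
  unfold IsGoodFlat
  rw [isTwoConnected_induce_iff]
  refine and_congr_right fun hS => ?_
  rw [isTwoConnected_iff]
  obtain ⟨s, hs⟩ := hS.1.1
  have hpre : (fromEdgeSet (edgesIn G S)).connectedComponentMk ⁻¹'
      {(fromEdgeSet (edgesIn G S)).connectedComponentMk s}ᶜ = Sᶜ := by
    ext v
    simp only [Set.mem_preimage, Set.mem_compl_iff, Set.mem_singleton_iff, mk_eq_mk_iff hS.1, hs,
      and_true]
    refine not_congr ⟨?_, Or.inr⟩
    rintro (rfl | h)
    · exact hs
    · exact h
  constructor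
  · rintro ⟨-, h⟩
    have hs' := h ((fromEdgeSet (edgesIn G S)).connectedComponentMk s)
    refine ⟨?_, fun Y hY hne hp => ?_⟩
    · obtain ⟨c, hc⟩ := hs'.1
      induction c using ConnectedComponent.ind with
      | _ y => exact ⟨y, hpre.subset hc⟩
    · obtain ⟨z, hz, hzY⟩ := Set.exists_of_ssubset (hY.ssubset_of_ne hp)
      obtain ⟨c, ⟨y, hy, rfl⟩, d, hd, hcd⟩ :=
        hs'.2 ((fromEdgeSet (edgesIn G S)).connectedComponentMk '' Y)
          (by
            rintro _ ⟨y, hy, rfl⟩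
            exact hpre.symm.subset (hY hy))
          (hne.image _)
          (by
            intro hh
            obtain ⟨y, hy, hyz⟩ := hh.symm.subset (hpre.symm.subset hz)
            rcases (mk_eq_mk_iff hS.1).mp hyz with rfl | ⟨h1, -⟩
            · exact hzY hy
            · exact hY hy h1)
      obtain ⟨-, u, v, huv, hu, rfl⟩ := contractEdges_adj.mp hcd
      have hv : v ∈ Sᶜ := hpre.subset hd.1
      rcases (mk_eq_mk_iff hS.1).mp hu with rfl | ⟨-, h1⟩
      · exact ⟨u, hy, v, ⟨hv, fun hvY => hd.2 ⟨v, hvY, rfl⟩⟩, huv⟩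
      · exact absurd h1 (hY hy)
  · intro h
    refine ⟨connOn_contractEdges (by simpa using hG.1), fun c => connOn_contractEdges ?_⟩
    induction c using ConnectedComponent.ind with
    | _ u =>
      by_cases hu : u ∈ S
      · rw [(mk_eq_mk_iff hS.1).mpr (Or.inr ⟨hu, hs⟩), hpre]
        exact h
      · have : (fromEdgeSet (edgesIn G S)).connectedComponentMk ⁻¹'
            {(fromEdgeSet (edgesIn G S)).connectedComponentMk u}ᶜ = Set.univ \ {u} := by
          ext v
          simp [mk_eq_mk_iff hS.1, hu]
        rw [this]
        exact hG.2 u trivial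

lemma biconnOn_pair {u v : V} (h : G.Adj u v) : BiconnOn G {u, v} := by
  refine ⟨?_, ?_⟩
  · rw [Set.pair_comm]
    exact (connOn_singleton u).insert rfl h
  · have h1 : ({u, v} : Set V) \ {u} = {v} := by
      ext w
      have := h.ne
      simp only [Set.mem_sdiff, Set.mem_insert_iff, Set.mem_singleton_iff]
      constructor
      · tauto
      · rintro rfl
        exact ⟨Or.inr rfl, h.ne.symm⟩
    have h2 : ({u, v} : Set V) \ {v} = {u} := by
      ext w
      simp only [Set.mem_sdiff, Set.mem_insert_iff, Set.mem_singleton_iff]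
      constructor
      · tauto
      · rintro rfl
        exact ⟨Or.inl rfl, h.ne⟩
    rintro w (rfl | rfl)
    · rw [h1]
      exact connOn_singleton _
    · rw [h2]
      exact connOn_singleton _

lemma edgesIn_pair {u v : V} (h : G.Adj u v) : edgesIn G {u, v} = {s(u, v)} := by
  ext e
  induction e with
  | _ a b =>
    simp only [mk_mem_edgesIn, Set.mem_insert_iff, Set.mem_singleton_iff, Sym2.eq_iff]
    constructor
    · rintro ⟨hab, rfl | rfl, rfl | rfl⟩
      · exact absurd rfl hab.ne
      · tauto
      · tauto
      · exact absurd rfl hab.ne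
    · rintro (⟨rfl, rfl⟩ | ⟨rfl, rfl⟩)
      · tauto
      · exact ⟨h.symm, by tauto⟩

/-- If `uv` is the only edge of `G - w` between `Y` and its complement, then `G - u - v` is
connected: everything else hangs together through `w`. -/
lemma connOn_compl_pair (hG : BiconnOn G Set.univ) {u v w : V} (hwu : w ≠ u) (hwv : w ≠ v)
    (hu : u ∈ Y) (hv : v ∉ Y)
    (hno : ∀ a ∈ Y, ∀ b ∉ Y, b ≠ w → G.Adj a b → a = u ∧ b = v) : ConnOn G {u, v}ᶜ := by
  refine connOn_of_base (x := w) (by simp [hwu, hwv]) fun D hD hne hwD => ?_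
  have hDu : ∀ a ∈ D, a ≠ u := fun a ha h => hD ha (Or.inl h)
  have hDv : ∀ a ∈ D, a ≠ v := fun a ha h => hD ha (Or.inr h)
  by_cases hDY : (D ∩ Y).Nonempty
  · obtain ⟨a, ha, b, hb, hab⟩ := (hG.2 u trivial).2 (D ∩ Y)
      (fun a ha => ⟨trivial, hDu a ha.1⟩) hDY
      (fun hh => hDv v (hh.symm.subset (show v ∈ Set.univ \ {u} from
        ⟨trivial, fun h => hv (Set.mem_singleton_iff.mp h ▸ hu)⟩)).1 rfl)
    have hbu : b ≠ u := hb.1.2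
    have hbv : b ≠ v := fun h =>
      hDu a ha.1 (hno a ha.2 b (h ▸ hv) (h ▸ hwv.symm) hab).1
    refine ⟨a, ha.1, b, ⟨by simp [hbu, hbv], fun hbD => ?_⟩, hab⟩
    exact hDu a ha.1 (hno a ha.2 b (fun h => hb.2 ⟨hbD, h⟩) (fun h => hwD (h ▸ hbD)) hab).1
  · obtain ⟨a, ha, b, hb, hab⟩ := (hG.2 v trivial).2 D (fun a ha => ⟨trivial, hDv a ha⟩) hne
      (fun hh => hDu u (hh.symm.subset ⟨trivial, fun h => hv (Set.mem_singleton_iff.mp h ▸ hu)⟩) rfl)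
    have hbv : b ≠ v := hb.1.2
    have hbu : b ≠ u := fun h => hDv a ha
      (hno u hu a (fun h' => hDY ⟨a, ha, h'⟩) (fun h' => hwD (h' ▸ ha)) (h ▸ hab.symm)).2
    exact ⟨a, ha, b, ⟨by simp [hbu, hbv], hb.2⟩, hab⟩

/-- For every edge `uv` of a `2`-connected graph on at least three vertices, deletion of `uv`
leaves a `2`-connected graph or `{u, v}` is a good flat. -/
lemma biconnOn_deleteEdges [Finite V] (hG : BiconnOn G Set.univ) (hc : 3 ≤ Nat.card V) {u v : V}
    (huv : G.Adj u v) (hn : ¬ ConnOn G {u, v}ᶜ) :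
    BiconnOn (G.deleteEdges {s(u, v)}) Set.univ := by
  have hadj : ∀ {a b : V}, (G.deleteEdges {s(u, v)}).Adj a b ↔ G.Adj a b ∧ s(a, b) ≠ s(u, v) := by
    intro a b
    simp [deleteEdges_adj]
  have hdel : ∀ w, ConnOn (G.deleteEdges {s(u, v)}) (Set.univ \ {w}) := by
    intro w
    refine ⟨(hG.2 w trivial).1, fun Y hY hne hp => ?_⟩
    by_contra! hno
    obtain ⟨a, ha, b, hb, hab⟩ := (hG.2 w trivial).2 Y hY hne hp
    have hcross : ∀ a ∈ Y, ∀ b ∉ Y, b ≠ w → G.Adj a b → s(a, b) = s(u, v) := by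
      intro a ha b hb hbw hab
      by_contra h
      exact hno a ha b ⟨⟨trivial, hbw⟩, hb⟩ (hadj.mpr ⟨hab, h⟩)
    have he := hcross a ha b hb.2 hb.1.2 hab
    have hwY : w ∉ Y := fun h => (hY h).2 rfl
    have key : ∀ u v, G.Adj u v → u ∈ Y → v ∉ Y → v ≠ w →
        (∀ a ∈ Y, ∀ b ∉ Y, b ≠ w → G.Adj a b → s(a, b) = s(u, v)) → ConnOn G {u, v}ᶜ := by
      intro u v huv hu hv hvw hcr
      refine connOn_compl_pair (Y := Y) (w := w) hG (fun h => hwY (h ▸ hu)) hvw.symm hu hv ?_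
      intro a ha b hb hbw hab
      rcases Sym2.eq_iff.mp (hcr a ha b hb hbw hab) with h | h
      · exact h
      · exact absurd (h.1 ▸ ha) hv
    rcases Sym2.eq_iff.mp he with ⟨rfl, rfl⟩ | ⟨rfl, rfl⟩
    · exact hn (key a b huv ha hb.2 hb.1.2 hcross)
    · exact hn (Set.pair_comm a b ▸ key a b hab ha hb.2 hb.1.2
        (fun c hc d hd hdw hcd => (hcross c hc d hd hdw hcd).trans Sym2.eq_swap))
  refine ⟨?_, fun w _ => hdel w⟩
  -- `u` keeps a neighbour other than `v`
  obtain ⟨a, ha, z, hz, haz⟩ := (hG.2 v trivial).2 {u}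
    (by
      rintro _ rfl
      exact ⟨trivial, huv.ne⟩) (Set.singleton_nonempty u)
    (by
      intro hh
      have h1 := Set.ncard_sdiff_singleton_add_one (Set.mem_univ v)
      rw [← hh, Set.ncard_singleton, Set.ncard_univ] at h1
      omega)
  rw [Set.mem_singleton_iff.mp ha] at haz
  have hzv : z ≠ v := hz.1.2
  have hzu : z ≠ u := haz.ne.symm
  have := (hdel u).insert (y := z) (z := u) ⟨trivial, hzu⟩
    (hadj.mpr ⟨haz.symm, fun h => by
      rcases Sym2.eq_iff.mp h with h | h
      · exact hzu h.1
      · exact hzv h.1⟩)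
  rwa [Set.insert_sdiff_singleton, Set.insert_eq_of_mem (Set.mem_univ u)] at this

end GoodFlats

/-! ### Linear forms and differences of basis vectors -/

section Forms

set_option linter.unusedSectionVars false

variable {V : Type*} [Fintype V] [DecidableEq V] {G H : SimpleGraph V} {X Y Z S : Set V}
  {B : Set (Sym2 V)}

/-- The indicator vector of a set of edges, placed at height one. -/
noncomputable def bvec (B : Set (Sym2 V)) : (Sym2 V → ℝ) × ℝ := (B.indicator fun _ => 1, 1)

/-- The difference of two coordinate vectors, placed at height zero. -/
noncomputable def ed (a b : Sym2 V) : (Sym2 V → ℝ) × ℝ := (Pi.single a 1 - Pi.single b 1, 0)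

/-- The linear form `x ↦ ∑ e ∈ A, x e`. -/
noncomputable def esum (A : Set (Sym2 V)) : (Sym2 V → ℝ) →ₗ[ℝ] ℝ where
  toFun x := ∑ e, A.indicator x e
  map_add' x y := by
    rw [← Finset.sum_add_distrib]
    exact Finset.sum_congr rfl fun e _ => by by_cases h : e ∈ A <;> simp [h]
  map_smul' c x := by
    rw [smul_eq_mul, Finset.mul_sum]
    exact Finset.sum_congr rfl fun e _ => by by_cases h : e ∈ A <;> simp [h]

/-- The coordinate form `(x, t) ↦ x e`. -/
noncomputable def coordForm (e : Sym2 V) : ((Sym2 V → ℝ) × ℝ) →ₗ[ℝ] ℝ :=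
  LinearMap.proj e ∘ₗ LinearMap.fst ℝ _ ℝ

/-- The form `(x, t) ↦ (|X| - 1) t - ∑ e ∈ E(X), x e`, which is nonnegative on the base polytope
because a forest has at most `|X| - 1` edges inside `X`. -/
noncomputable def flatForm (G : SimpleGraph V) (X : Set V) : ((Sym2 V → ℝ) × ℝ) →ₗ[ℝ] ℝ :=
  ((X.ncard : ℝ) - 1) • LinearMap.snd ℝ _ ℝ - esum (edgesIn G X) ∘ₗ LinearMap.fst ℝ _ ℝ

lemma coordForm_apply (e : Sym2 V) (y : (Sym2 V → ℝ) × ℝ) : coordForm e y = y.1 e := rfl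

lemma flatForm_apply (y : (Sym2 V → ℝ) × ℝ) :
    flatForm G X y = ((X.ncard : ℝ) - 1) * y.2 - esum (edgesIn G X) y.1 := rfl

lemma esum_apply (A : Set (Sym2 V)) (x : Sym2 V → ℝ) : esum A x = ∑ e, A.indicator x e := rfl

lemma esum_union_add_inter (A B : Set (Sym2 V)) (x : Sym2 V → ℝ) :
    esum (A ∪ B) x + esum (A ∩ B) x = esum A x + esum B x := by
  simp only [esum_apply, ← Finset.sum_add_distrib]
  exact Finset.sum_congr rfl fun e _ => Set.indicator_union_add_inter_apply x A B e

lemma esum_indicator_one (A B : Set (Sym2 V)) :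
    esum A (B.indicator fun _ => (1 : ℝ)) = ((B ∩ A).ncard : ℝ) := by
  classical
  rw [esum_apply, Set.indicator_indicator, Set.inter_comm, Set.ncard_eq_toFinset_card']
  simp only [Set.indicator_apply, Finset.sum_boole]
  congr 2
  ext e
  simp

lemma esum_single_sub (A : Set (Sym2 V)) (a b : Sym2 V) :
    esum A (Pi.single a 1 - Pi.single b 1) =
      A.indicator (fun _ => (1 : ℝ)) a - A.indicator (fun _ => (1 : ℝ)) b := by
  classical
  have h : ∀ a, esum A (Pi.single a 1) = A.indicator (fun _ => (1 : ℝ)) a := by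
    intro a
    rw [esum_apply, Finset.sum_eq_single a]
    · simp [Set.indicator_apply]
    · intro b _ hb
      simp [Set.indicator_apply, hb]
    · simp
  rw [map_sub, h, h]

lemma esum_of_support {A C : Set (Sym2 V)} {x : Sym2 V → ℝ} (hx : ∀ e ∈ A, e ∉ C → x e = 0)
    (hCA : C ⊆ A) : esum A x = esum C x := by
  simp only [esum_apply]
  refine Finset.sum_congr rfl fun e _ => ?_
  by_cases h : e ∈ C
  · rw [Set.indicator_of_mem h, Set.indicator_of_mem (hCA h)]
  · rw [Set.indicator_of_notMem h]
    by_cases h' : e ∈ A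
    · rw [Set.indicator_of_mem h', hx e h' h]
    · rw [Set.indicator_of_notMem h']

lemma flatForm_bvec : flatForm G X (bvec B) = (X.ncard : ℝ) - 1 - ((B ∩ edgesIn G X).ncard : ℝ) := by
  rw [flatForm_apply, bvec, esum_indicator_one, mul_one]

lemma flatForm_bvec_nonneg (hB : TreeOn G B Set.univ) (hX : X.Nonempty) :
    0 ≤ flatForm G X (bvec B) := by
  rw [flatForm_bvec]
  have : (((B ∩ edgesIn G X).ncard + 1 : ℕ) : ℝ) ≤ (X.ncard : ℝ) := by
    exact_mod_cast hB.card_inter_le hX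
  push_cast at this
  linarith

lemma flatForm_bvec_eq_zero_iff :
    flatForm G X (bvec B) = 0 ↔ (B ∩ edgesIn G X).ncard + 1 = X.ncard := by
  rw [flatForm_bvec, ← @Nat.cast_inj ℝ]
  push_cast
  constructor <;> intro h <;> linarith

lemma flatForm_univ_bvec (hB : TreeOn G B Set.univ) : flatForm G Set.univ (bvec B) = 0 := by
  rw [flatForm_bvec_eq_zero_iff, Set.inter_eq_left.mpr hB.1]
  exact hB.2.2

/-- Modularity of `X ↦ flatForm G X` for pairs without edges between the two differences. -/
lemma flatForm_union_add_inter (h : ∀ a ∈ X \ Y, ∀ b ∈ Y \ X, ¬ G.Adj a b)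
    (y : (Sym2 V → ℝ) × ℝ) :
    flatForm G (X ∪ Y) y + flatForm G (X ∩ Y) y = flatForm G X y + flatForm G Y y := by
  have h1 : edgesIn G (X ∪ Y) = edgesIn G X ∪ edgesIn G Y := by
    ext e
    induction e with
    | _ a b =>
      simp only [mk_mem_edgesIn, Set.mem_union]
      constructor
      · rintro ⟨hab, ha, hb⟩
        have h1 := h a
        have h2 := h b
        have h3 := hab.symm
        simp only [Set.mem_sdiff] at h1 h2
        by_cases haX : a ∈ X <;> by_cases hbX : b ∈ X <;> by_cases haY : a ∈ Y <;>
          by_cases hbY : b ∈ Y <;> grind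
      · tauto
  have h2 : edgesIn G (X ∩ Y) = edgesIn G X ∩ edgesIn G Y := by
    ext e
    induction e with
    | _ a b =>
      simp only [mk_mem_edgesIn, Set.mem_inter_iff]
      tauto
  have h3 : ((X ∪ Y).ncard : ℝ) + ((X ∩ Y).ncard : ℝ) = (X.ncard : ℝ) + (Y.ncard : ℝ) := by
    exact_mod_cast Set.ncard_union_add_ncard_inter X Y
  have h4 := esum_union_add_inter (edgesIn G X) (edgesIn G Y) y.1
  simp only [flatForm_apply, h1, h2]
  linear_combination y.2 * h3 - h4

lemma flatForm_singleton (x : V) (y : (Sym2 V → ℝ) × ℝ) : flatForm G {x} y = 0 := by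
  simp [flatForm_apply, edgesIn_singleton, esum_apply]

lemma ed_add (a b c : Sym2 V) : ed a b + ed b c = ed a c := by
  simp [ed]

lemma neg_ed (a b : Sym2 V) : -ed a b = ed b a := by
  simp [ed]

lemma bvec_insert_sub {a b : Sym2 V} {T : Set (Sym2 V)} (ha : a ∉ T) (hb : b ∉ T) :
    bvec (insert a T) - bvec (insert b T) = ed a b := by
  classical
  ext e
  · by_cases hT : e ∈ T
    · have h1 : e ≠ a := fun h => ha (h ▸ hT)
      have h2 : e ≠ b := fun h => hb (h ▸ hT)
      simp [bvec, ed, hT, h1, h2]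
    · simp [bvec, ed, Set.indicator_apply, hT, Pi.single_apply]
  · simp [bvec, ed]

lemma eq_sum_ed {x : Sym2 V → ℝ} (hx : ∑ e, x e = 0) (a : Sym2 V) :
    ((x, 0) : (Sym2 V → ℝ) × ℝ) = ∑ e, x e • ed e a := by
  ext f
  · simp only [Prod.fst_sum, ed, Finset.sum_apply, Prod.smul_fst, Pi.smul_apply, Pi.sub_apply,
      smul_eq_mul, mul_sub, Finset.sum_sub_distrib, ← Finset.sum_mul, hx, zero_mul, sub_zero]
    rw [Finset.sum_eq_single f] <;> simp +contextual [eq_comm]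
  · simp [Prod.snd_sum, ed]

/-- A vector with coordinate sum zero supported on `A` is a combination of the `ed a b`. -/
lemma mem_of_sum_zero {A : Set (Sym2 V)} {R : Submodule ℝ ((Sym2 V → ℝ) × ℝ)}
    (hR : ∀ a ∈ A, ∀ b ∈ A, ed a b ∈ R) {x : Sym2 V → ℝ} (hx : ∀ e ∉ A, x e = 0)
    (hs : ∑ e, x e = 0) : ((x, 0) : (Sym2 V → ℝ) × ℝ) ∈ R := by
  rcases A.eq_empty_or_nonempty with rfl | ⟨a, ha⟩
  · have : x = 0 := funext fun e => hx e (Set.notMem_empty e)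
    rw [this]
    exact R.zero_mem
  · rw [eq_sum_ed hs a]
    refine R.sum_mem fun e _ => ?_
    by_cases he : e ∈ A
    · exact R.smul_mem _ (hR e he a ha)
    · simp [hx e he]

lemma mem_of_sum_zero_int {A : Set (Sym2 V)} {R : Submodule ℤ ((Sym2 V → ℝ) × ℝ)}
    (hR : ∀ a ∈ A, ∀ b ∈ A, ed a b ∈ R) {x : Sym2 V → ℝ} (hx : ∀ e ∉ A, x e = 0)
    (hs : ∑ e, x e = 0) (hz : IsLatticePoint x) : ((x, 0) : (Sym2 V → ℝ) × ℝ) ∈ R := by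
  rcases A.eq_empty_or_nonempty with rfl | ⟨a, ha⟩
  · have : x = 0 := funext fun e => hx e (Set.notMem_empty e)
    rw [this]
    exact R.zero_mem
  · rw [eq_sum_ed hs a]
    refine R.sum_mem fun e _ => ?_
    by_cases he : e ∈ A
    · obtain ⟨z, hz⟩ := hz e
      rw [hz, Int.cast_smul_eq_zsmul]
      exact R.smul_mem _ (hR e he a ha)
    · simp [hx e he]

variable {R : AddSubgroup ((Sym2 V → ℝ) × ℝ)}

/-- If edges sharing an endpoint in the connected set `X` have their difference in `R`, then so
do any two edges meeting `X`. -/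
lemma ed_mem_of_star (hX : ConnOn H X) (hXZ : X ⊆ Z)
    (hR : ∀ u ∈ X, ∀ v ∈ Z, ∀ w ∈ Z, H.Adj u v → H.Adj u w → ed s(u, v) s(u, w) ∈ R)
    {u v u' v' : V} (hu : u ∈ X) (hv : v ∈ Z) (huv : H.Adj u v)
    (hu' : u' ∈ X) (hv' : v' ∈ Z) (huv' : H.Adj u' v') : ed s(u, v) s(u', v') ∈ R := by
  by_contra hn
  obtain ⟨y, hy, z, hz, hyz⟩ := hX.2
    {y ∈ X | ∀ v ∈ Z, H.Adj y v → ed s(y, v) s(u', v') ∈ R} (Set.sep_subset _ _)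
    ⟨u', hu', fun w hw hw' => hR u' hu' w hw v' hv' hw' huv'⟩
    (fun hh => hn ((hh.symm.subset hu).2 v hv huv))
  refine hz.2 ⟨hz.1, fun w hw hzw => ?_⟩
  have h1 := hR z hz.1 w hw y (hXZ hy.1) hzw hyz.symm
  have h2 := hy.2 z (hXZ hz.1) hyz
  rw [Sym2.eq_swap] at h2
  rw [← ed_add _ s(z, y) _]
  exact R.add_mem h1 h2

/-- In a `2`-connected graph the differences of spanning trees generate all differences of
edges: two edges at `u` are interchanged by hanging `u` on a spanning tree of the rest. -/
lemma ed_mem_of_biconnOn (hX : BiconnOn H X)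
    (hR : ∀ B B', TreeOn H B X → TreeOn H B' X → bvec B - bvec B' ∈ R)
    {a b : Sym2 V} (ha : a ∈ edgesIn H X) (hb : b ∈ edgesIn H X) : ed a b ∈ R := by
  have hstar : ∀ u ∈ X, ∀ v ∈ X, ∀ w ∈ X, H.Adj u v → H.Adj u w →
      ed s(u, v) s(u, w) ∈ R := by
    intro u hu v hv w hw huv huw
    obtain ⟨T, hT⟩ := (hX.2 u hu).exists_treeOn
    have key : ∀ v ∈ X, H.Adj u v → TreeOn H (insert s(u, v) T) X ∧ s(u, v) ∉ T := by
      intro v hv huv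
      have h1 := hT.join (treeOn_singleton (G := H) u) Set.disjoint_sdiff_left
        (a := v) (b := u) ⟨hv, huv.ne.symm⟩ rfl huv.symm
      rw [Set.union_empty, Set.sdiff_union_of_subset (by simpa using hu), Sym2.eq_swap] at h1
      refine ⟨h1, fun h => ?_⟩
      exact (mk_mem_edgesIn.mp (hT.1 h)).2.1.2 rfl
    have h1 := key v hv huv
    have h2 := key w hw huw
    rw [← bvec_insert_sub h1.2 h2.2]
    exact hR _ _ h1.1 h2.1
  induction a with
  | _ u v =>
    induction b with
    | _ u' v' =>
      rw [mk_mem_edgesIn] at ha hb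
      exact ed_mem_of_star hX.1 subset_rfl hstar ha.2.1 ha.2.2 ha.1 hb.2.1 hb.2.2 hb.1

/-- The contracted version of `ed_mem_of_biconnOn`: only spanning trees containing a fixed
spanning tree `T` of `S` are used, and only edges outside `E(S)` are reached. -/
lemma ed_mem_of_contract (hG : BiconnOn G Set.univ) (hS : ConnOn G Sᶜ) {T : Set (Sym2 V)}
    (hT : TreeOn G T S)
    (hR : ∀ B B', TreeOn G B Set.univ → TreeOn G B' Set.univ → T ⊆ B → T ⊆ B' →
      bvec B - bvec B' ∈ R)
    {a b : Sym2 V} (ha : a ∈ G.edgeSet \ edgesIn G S) (hb : b ∈ G.edgeSet \ edgesIn G S) :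
    ed a b ∈ R := by
  have hstar : ∀ u ∈ Sᶜ, ∀ v ∈ Set.univ, ∀ w ∈ Set.univ, G.Adj u v → G.Adj u w →
      ed s(u, v) s(u, w) ∈ R := by
    intro u hu v _ w _ huv huw
    obtain ⟨F, _, _, hF⟩ := hT.exists_extend (hG.2 u trivial)
      (fun s hs => ⟨trivial, fun h => hu (Set.mem_singleton_iff.mp h ▸ hs)⟩)
    have hTF := hF T hT
    have key : ∀ v, G.Adj u v → TreeOn G (insert s(u, v) (T ∪ F)) Set.univ ∧
        s(u, v) ∉ T ∪ F := by
      intro v huv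
      have h1 := hTF.join (treeOn_singleton (G := G) u) Set.disjoint_sdiff_left
        (a := v) (b := u) ⟨trivial, huv.ne.symm⟩ rfl huv.symm
      rw [Set.union_empty, Set.sdiff_union_of_subset (Set.subset_univ _), Sym2.eq_swap] at h1
      refine ⟨h1, fun h => ?_⟩
      exact (mk_mem_edgesIn.mp (hTF.1 h)).2.1.2 rfl
    have h1 := key v huv
    have h2 := key w huw
    rw [← bvec_insert_sub h1.2 h2.2]
    exact hR _ _ h1.1 h2.1 (fun e he => Or.inr (Or.inl he)) (fun e he => Or.inr (Or.inl he))
  have hend : ∀ e ∈ G.edgeSet \ edgesIn G S, ∃ u ∈ Sᶜ, ∃ v, G.Adj u v ∧ e = s(u, v) := by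
    intro e he
    induction e with
    | _ u v =>
      rw [Set.mem_sdiff, mk_mem_edgesIn, mem_edgeSet] at he
      by_cases hu : u ∈ S
      · by_cases hv : v ∈ S
        · exact absurd ⟨he.1, hu, hv⟩ he.2
        · exact ⟨v, hv, u, he.1.symm, Sym2.eq_swap⟩
      · exact ⟨u, hu, v, he.1, rfl⟩
  obtain ⟨u, hu, v, huv, rfl⟩ := hend a ha
  obtain ⟨u', hu', v', huv', rfl⟩ := hend b hb
  exact ed_mem_of_star hS (Set.subset_univ _) hstar hu trivial huv hu' trivial huv'

end Forms

/-! ### Facets and lattice of the cone over the base polytope -/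

section Cone

set_option linter.unusedSectionVars false

variable {V : Type*} [Fintype V] [DecidableEq V] {G : SimpleGraph V} {X S : Set V}
  {B : Set (Sym2 V)} {h g : ((Sym2 V → ℝ) × ℝ) →ₗ[ℝ] ℝ} {y : (Sym2 V → ℝ) × ℝ}

/-- The linear span of the spanning trees placed at height one. -/
def treeSpan (G : SimpleGraph V) : Submodule ℝ ((Sym2 V → ℝ) × ℝ) :=
  Submodule.span ℝ {y | ∃ B, TreeOn G B Set.univ ∧ y = bvec B}

/-- The linear span of the spanning trees on which the form `h` vanishes. -/
def faceSpan (G : SimpleGraph V) (h : ((Sym2 V → ℝ) × ℝ) →ₗ[ℝ] ℝ) :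
    Submodule ℝ ((Sym2 V → ℝ) × ℝ) :=
  Submodule.span ℝ {y | ∃ B, TreeOn G B Set.univ ∧ h (bvec B) = 0 ∧ y = bvec B}

lemma bvec_mem_treeSpan (hB : TreeOn G B Set.univ) : bvec B ∈ treeSpan G :=
  Submodule.subset_span ⟨B, hB, rfl⟩

lemma bvec_mem_faceSpan (hB : TreeOn G B Set.univ) (h0 : h (bvec B) = 0) :
    bvec B ∈ faceSpan G h :=
  Submodule.subset_span ⟨B, hB, h0, rfl⟩

lemma faceSpan_le_treeSpan : faceSpan G h ≤ treeSpan G :=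
  Submodule.span_mono fun _ ⟨B, hB, _, hy⟩ => ⟨B, hB, hy⟩

lemma faceSpan_vanish (hy : y ∈ faceSpan G h) (hgh : ∀ B, TreeOn G B Set.univ →
    h (bvec B) = 0 → g (bvec B) = 0) : g y = 0 := by
  have : faceSpan G h ≤ LinearMap.ker g := by
    refine Submodule.span_le.mpr ?_
    rintro _ ⟨B, hB, h0, rfl⟩
    exact hgh B hB h0
  exact this hy

lemma treeSpan_ext (hy : y ∈ treeSpan G) (hgh : ∀ B, TreeOn G B Set.univ →
    g (bvec B) = h (bvec B)) : g y = h y := by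
  have : treeSpan G ≤ LinearMap.ker (g - h) := by
    refine Submodule.span_le.mpr ?_
    rintro _ ⟨B, hB, rfl⟩
    simp [hgh B hB]
  simpa [sub_eq_zero] using this hy

lemma indicator_mem_basePolytope (hG : ConnOn G Set.univ) (hB : TreeOn G B Set.univ) :
    (B.indicator fun _ => (1 : ℝ)) ∈ basePolytope G :=
  subset_convexHull ℝ _ ⟨B, (isGraphicBasis_iff hG).mpr hB, rfl⟩

lemma bvec_mem_cone (hG : ConnOn G Set.univ) (hB : TreeOn G B Set.univ) :
    bvec B ∈ coneOver (basePolytope G) :=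
  ⟨1, _, indicator_mem_basePolytope hG hB, zero_le_one, by simp [bvec]⟩

lemma bvec_mem_lattice (hG : ConnOn G Set.univ) (hB : TreeOn G B Set.univ) :
    bvec B ∈ coneLattice (basePolytope G) :=
  Submodule.subset_span ⟨_, indicator_mem_basePolytope hG hB, fun e => by
    by_cases he : e ∈ B
    · exact ⟨1, by simp [he]⟩
    · exact ⟨0, by simp [he]⟩, rfl⟩

/-- The points of the cone are the nonnegative combinations of spanning trees. -/
lemma cone_exists (hG : ConnOn G Set.univ) (hy : y ∈ coneOver (basePolytope G)) :
    ∃ (ι : Type) (s : Finset ι) (w : ι → ℝ) (B : ι → Set (Sym2 V)), (∀ i ∈ s, 0 ≤ w i) ∧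
      (∀ i ∈ s, TreeOn G (B i) Set.univ) ∧ y = ∑ i ∈ s, w i • bvec (B i) := by
  obtain ⟨t, p, hp, ht, rfl⟩ := hy
  rw [basePolytope, convexHull_eq] at hp
  obtain ⟨ι, s, w, z, hw, hw1, hz, rfl⟩ := hp
  have hz' : ∀ i, ∃ B, i ∈ s → TreeOn G B Set.univ ∧ z i = B.indicator fun _ => (1 : ℝ) := by
    intro i
    by_cases hi : i ∈ s
    · obtain ⟨B, hB, h⟩ := hz i hi
      exact ⟨B, fun _ => ⟨(isGraphicBasis_iff hG).mp hB, h⟩⟩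
    · exact ⟨∅, fun h => absurd h hi⟩
  choose B hB using hz'
  refine ⟨ι, s, fun i => t * w i, B, fun i hi => mul_nonneg ht (hw i hi),
    fun i hi => (hB i hi).1, ?_⟩
  rw [Finset.centerMass_eq_of_sum_1 _ _ hw1, Prod.ext_iff]
  constructor
  · simp only [Prod.fst_sum, Prod.smul_fst, bvec, mul_smul, ← Finset.smul_sum]
    congr 1
    exact Finset.sum_congr rfl fun i hi => by rw [(hB i hi).2]
  · simp [Prod.snd_sum, bvec, ← Finset.mul_sum, hw1]

lemma nonneg_on_cone (hG : ConnOn G Set.univ)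
    (h0 : ∀ B, TreeOn G B Set.univ → 0 ≤ h (bvec B)) :
    ∀ y ∈ coneOver (basePolytope G), 0 ≤ h y := by
  intro y hy
  obtain ⟨ι, s, w, B, hw, hB, rfl⟩ := cone_exists hG hy
  rw [map_sum]
  exact Finset.sum_nonneg fun i hi => by
    rw [map_smul]
    exact mul_nonneg (hw i hi) (h0 _ (hB i hi))

lemma cone_subset_treeSpan (hG : ConnOn G Set.univ) (hy : y ∈ coneOver (basePolytope G)) :
    y ∈ treeSpan G := by
  obtain ⟨ι, s, w, B, hw, hB, rfl⟩ := cone_exists hG hy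
  exact Submodule.sum_mem _ fun i hi => Submodule.smul_mem _ _ (bvec_mem_treeSpan (hB i hi))

lemma span_cone (hG : ConnOn G Set.univ) :
    Submodule.span ℝ (coneOver (basePolytope G)) = treeSpan G := by
  refine le_antisymm (Submodule.span_le.mpr fun y hy => cone_subset_treeSpan hG hy)
    (Submodule.span_mono ?_)
  rintro _ ⟨B, hB, rfl⟩
  exact bvec_mem_cone hG hB

lemma span_face (hG : ConnOn G Set.univ) (h0 : ∀ B, TreeOn G B Set.univ → 0 ≤ h (bvec B)) :
    Submodule.span ℝ {y ∈ coneOver (basePolytope G) | h y = 0} = faceSpan G h := by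
  refine le_antisymm (Submodule.span_le.mpr ?_) (Submodule.span_mono ?_)
  · rintro y ⟨hy, hy0⟩
    obtain ⟨ι, s, w, B, hw, hB, rfl⟩ := cone_exists hG hy
    rw [map_sum, Finset.sum_eq_zero_iff_of_nonneg
      (fun i hi => by rw [map_smul]; exact mul_nonneg (hw i hi) (h0 _ (hB i hi)))] at hy0
    refine Submodule.sum_mem _ fun i hi => ?_
    have := hy0 i hi
    rw [map_smul, smul_eq_mul, mul_eq_zero] at this
    rcases this with h1 | h1
    · rw [h1, zero_smul]
      exact Submodule.zero_mem _
    · exact Submodule.smul_mem _ _ (bvec_mem_faceSpan (hB i hi) h1)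
  · rintro _ ⟨B, hB, hB0, rfl⟩
    exact ⟨bvec_mem_cone hG hB, hB0⟩

lemma lattice_subset_treeSpan (hG : ConnOn G Set.univ)
    (hy : y ∈ coneLattice (basePolytope G)) : y ∈ treeSpan G := by
  have : coneLattice (basePolytope G) ≤ (treeSpan G).restrictScalars ℤ := by
    refine Submodule.span_le.mpr ?_
    rintro _ ⟨p, hp, -, rfl⟩
    exact cone_subset_treeSpan hG ⟨1, p, hp, zero_le_one, by simp⟩
  exact this hy

lemma lattice_integral (hh : ∀ p : Sym2 V → ℝ, IsLatticePoint p → ∃ z : ℤ, h (p, 1) = z) :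
    ∀ y ∈ coneLattice (basePolytope G), ∃ z : ℤ, h y = z := by
  intro y hy
  induction hy using Submodule.span_induction with
  | mem y hy =>
    obtain ⟨p, -, hp, rfl⟩ := hy
    exact hh p hp
  | zero => exact ⟨0, by simp⟩
  | add y y' _ _ h1 h2 =>
    obtain ⟨z, hz⟩ := h1
    obtain ⟨z', hz'⟩ := h2
    exact ⟨z + z', by simp [hz, hz']⟩
  | smul c y _ h1 =>
    obtain ⟨z, hz⟩ := h1
    exact ⟨c * z, by rw [map_zsmul, hz]; simp⟩

lemma coordForm_integral (e : Sym2 V) :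
    ∀ y ∈ coneLattice (basePolytope G), ∃ z : ℤ, coordForm e y = z :=
  lattice_integral fun _ hp => hp e

lemma flatForm_integral (X : Set V) :
    ∀ y ∈ coneLattice (basePolytope G), ∃ z : ℤ, flatForm G X y = z := by
  classical
  refine lattice_integral fun p hp => ?_
  choose z hz using hp
  refine ⟨(X.ncard - 1) * 1 - ∑ e, if e ∈ edgesIn G X then z e else 0, ?_⟩
  rw [flatForm_apply, esum_apply]
  push_cast
  congr 1
  exact Finset.sum_congr rfl fun e _ => by
    by_cases he : e ∈ edgesIn G X <;> simp [he, hz]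

lemma treeSpan_support (hy : y ∈ treeSpan G) {e : Sym2 V} (he : e ∉ G.edgeSet) : y.1 e = 0 :=
  treeSpan_ext (g := coordForm e) (h := 0) hy fun B hB => by
    have : e ∉ B := fun h => he (edgesIn_subset (hB.1 h))
    simp [coordForm_apply, bvec, this]

lemma treeSpan_flatForm_univ (hy : y ∈ treeSpan G) : flatForm G Set.univ y = 0 :=
  treeSpan_ext (h := 0) hy fun B hB => by simp [flatForm_univ_bvec hB]

/-- A reduced facet form `h` agrees on the span of the cone with every integral nonnegative form
attaining the value one on the lattice that vanishes wherever `h` does. -/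
lemma facet_unique (hG : ConnOn G Set.univ) (hF : IsFacetForm (basePolytope G) h)
    (hR : IsReducedForm (basePolytope G) h)
    (hgint : ∀ y ∈ coneLattice (basePolytope G), ∃ z : ℤ, g y = z)
    (hg0 : ∀ B, TreeOn G B Set.univ → 0 ≤ g (bvec B))
    (hgh : ∀ B, TreeOn G B Set.univ → h (bvec B) = 0 → g (bvec B) = 0)
    {y₀ : (Sym2 V → ℝ) × ℝ} (hy₀ : y₀ ∈ coneLattice (basePolytope G)) (hgy₀ : g y₀ = 1)
    (hy : y ∈ treeSpan G) : h y = g y := by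
  have hh0 : ∀ B, TreeOn G B Set.univ → 0 ≤ h (bvec B) := fun B hB =>
    hF.1 _ (bvec_mem_cone hG hB)
  have hdim := hF.2
  rw [span_cone hG, span_face hG hh0] at hdim
  have hy₀U := lattice_subset_treeSpan hG hy₀
  have hle : faceSpan G h ≤ treeSpan G ⊓ LinearMap.ker g := fun z hz =>
    ⟨faceSpan_le_treeSpan hz, faceSpan_vanish hz hgh⟩
  have hlt : treeSpan G ⊓ LinearMap.ker g < treeSpan G := by
    refine lt_of_le_of_ne inf_le_left fun hh => ?_
    rw [← hh] at hy₀U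
    have : g y₀ = 0 := hy₀U.2
    rw [hgy₀] at this
    exact one_ne_zero this
  have h1 := Submodule.finrank_lt_finrank_of_lt hlt
  have heq : faceSpan G h = treeSpan G ⊓ LinearMap.ker g :=
    Submodule.eq_of_le_of_finrank_le hle (by omega)
  have hprop : ∀ y ∈ treeSpan G, h y = g y * h y₀ := by
    intro y hy
    have h2 : y - g y • y₀ ∈ faceSpan G h := by
      rw [heq]
      exact ⟨Submodule.sub_mem _ hy (Submodule.smul_mem _ _ hy₀U), by simp [hgy₀]⟩
    have h3 : h (y - g y • y₀) = 0 := faceSpan_vanish h2 fun _ _ h => h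
    rw [map_sub, map_smul, smul_eq_mul, sub_eq_zero] at h3
    exact h3
  obtain ⟨y₁, hy₁, hhy₁⟩ := hR.2
  obtain ⟨m, hm⟩ := hR.1 y₀ hy₀
  obtain ⟨k, hk⟩ := hgint y₁ hy₁
  have h4 := hprop y₁ (lattice_subset_treeSpan hG hy₁)
  rw [hhy₁, hm, hk] at h4
  have h5 : k * m = 1 := by exact_mod_cast h4.symm
  rcases Int.eq_one_or_neg_one_of_mul_eq_one' h5 with h6 | h6
  · rw [hprop y hy, hm, h6.2]
    simp
  · -- a negative factor would make `h` vanish on all spanning trees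
    exfalso
    have h7 : h y₁ = (0 : ((Sym2 V → ℝ) × ℝ) →ₗ[ℝ] ℝ) y₁ :=
      treeSpan_ext (lattice_subset_treeSpan hG hy₁) fun B hB => by
        have h8 := hprop _ (bvec_mem_treeSpan hB)
        have h9 := hh0 B hB
        have h10 := hg0 B hB
        rw [hm, h6.2] at h8
        push_cast at h8
        rw [LinearMap.zero_apply]
        linarith
    rw [hhy₁, LinearMap.zero_apply] at h7
    exact one_ne_zero h7

/-- An integral nonnegative form which attains the value one on the lattice and whose zeros in
the span of the cone are spanned by spanning trees is the reduced equation of a facet. -/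
lemma isFacet_of (hG : ConnOn G Set.univ)
    (hgint : ∀ y ∈ coneLattice (basePolytope G), ∃ z : ℤ, g y = z)
    (hg0 : ∀ B, TreeOn G B Set.univ → 0 ≤ g (bvec B))
    {y₀ : (Sym2 V → ℝ) × ℝ} (hy₀ : y₀ ∈ coneLattice (basePolytope G)) (hgy₀ : g y₀ = 1)
    (hker : ∀ y ∈ treeSpan G, g y = 0 → y ∈ faceSpan G g) :
    IsFacetForm (basePolytope G) g ∧ IsReducedForm (basePolytope G) g := by
  refine ⟨⟨nonneg_on_cone hG hg0, ?_⟩, hgint, y₀, hy₀, hgy₀⟩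
  rw [span_cone hG, span_face hG hg0]
  have hy₀U := lattice_subset_treeSpan hG hy₀
  have hy₀0 : y₀ ≠ 0 := by
    rintro rfl
    simp at hgy₀
  have hinf : faceSpan G g ⊓ Submodule.span ℝ {y₀} = ⊥ := by
    rw [Submodule.eq_bot_iff]
    rintro y ⟨hy1, hy2⟩
    obtain ⟨c, rfl⟩ := Submodule.mem_span_singleton.mp hy2
    have : g (c • y₀) = 0 := faceSpan_vanish hy1 fun _ _ h => h
    rw [map_smul, hgy₀, smul_eq_mul, mul_one] at this
    rw [this, zero_smul]
  have hsup : faceSpan G g ⊔ Submodule.span ℝ {y₀} = treeSpan G := by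
    refine le_antisymm (sup_le faceSpan_le_treeSpan ?_) fun y hy => ?_
    · rwa [Submodule.span_singleton_le_iff_mem]
    · have h2 := hker (y - g y • y₀)
        (Submodule.sub_mem _ hy (Submodule.smul_mem _ _ hy₀U)) (by simp [hgy₀])
      have h3 := Submodule.add_mem_sup h2
        (Submodule.smul_mem _ (g y) (Submodule.mem_span_singleton_self (R := ℝ) y₀))
      rwa [sub_add_cancel] at h3
  have := Submodule.finrank_sup_add_finrank_inf_eq (faceSpan G g) (Submodule.span ℝ {y₀})
  rw [hsup, hinf, finrank_bot, finrank_span_singleton hy₀0] at this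
  omega

/-- In a `2`-connected graph the lattice contains all differences of two edges. -/
lemma ed_mem_lattice (hG : BiconnOn G Set.univ) {a b : Sym2 V} (ha : a ∈ G.edgeSet)
    (hb : b ∈ G.edgeSet) : ed a b ∈ coneLattice (basePolytope G) :=
  ed_mem_of_biconnOn (R := (coneLattice (basePolytope G)).toAddSubgroup) hG
    (fun _ _ hB hB' => Submodule.sub_mem _ (bvec_mem_lattice hG.1 hB)
      (bvec_mem_lattice hG.1 hB'))
    (by rwa [edgesIn_univ]) (by rwa [edgesIn_univ])

lemma coordForm_ed {a b : Sym2 V} (hab : a ≠ b) : coordForm a (ed a b) = 1 := by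
  simp [coordForm_apply, ed, hab]

lemma flatForm_ed {a b : Sym2 V} (ha : a ∉ edgesIn G X) (hb : b ∈ edgesIn G X) :
    flatForm G X (ed a b) = 1 := by
  simp [flatForm_apply, ed, esum_single_sub, ha, hb]

lemma coordForm_bvec_nonneg (e : Sym2 V) (B : Set (Sym2 V)) : 0 ≤ coordForm e (bvec B) :=
  Set.indicator_nonneg (fun _ _ => zero_le_one) e

/-- A vector of the span of the cone minus the multiple of a spanning tree at the same height. -/
lemma exists_sub_tree (hB : TreeOn G B Set.univ) (hy : y ∈ treeSpan G) :
    ∃ x : Sym2 V → ℝ, y = y.2 • bvec B + (x, 0) ∧ (∀ e ∉ G.edgeSet, x e = 0) ∧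
      ∑ e, x e = 0 := by
  have hz := Submodule.sub_mem _ hy (Submodule.smul_mem _ y.2 (bvec_mem_treeSpan hB))
  set z := y - y.2 • bvec B with hzdef
  have hz2 : z.2 = 0 := by simp [hzdef, bvec]
  refine ⟨z.1, ?_, fun e he => treeSpan_support hz he, ?_⟩
  · have : z = (z.1, 0) := Prod.ext rfl hz2
    rw [← this, hzdef, add_sub_cancel]
  · have h1 := treeSpan_flatForm_univ hz
    rw [flatForm_apply, hz2, mul_zero, zero_sub, neg_eq_zero, edgesIn_univ,
      ← esum_of_support (A := Set.univ) (fun e _ he => treeSpan_support hz he)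
      (Set.subset_univ _)] at h1
    simpa [esum_apply] using h1

/-- If `G - e` is `2`-connected then `x_e ≥ 0` is the reduced equation of a facet. -/
lemma isFacet_coordForm (hG : BiconnOn G Set.univ) {e f : Sym2 V} (he : e ∈ G.edgeSet)
    (hf : f ∈ G.edgeSet) (hef : e ≠ f) (hd : BiconnOn (G.deleteEdges {e}) Set.univ) :
    IsFacetForm (basePolytope G) (coordForm e) ∧ IsReducedForm (basePolytope G) (coordForm e) := by
  have hE : edgesIn (G.deleteEdges {e}) Set.univ = G.edgeSet \ {e} := by
    rw [edgesIn_univ, edgeSet_deleteEdges]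
  have htree : ∀ B, TreeOn (G.deleteEdges {e}) B Set.univ →
      TreeOn G B Set.univ ∧ coordForm e (bvec B) = 0 := by
    intro B hB
    have h1 := hB.1
    rw [hE] at h1
    refine ⟨⟨h1.trans (by rw [edgesIn_univ]; exact Set.sdiff_subset), hB.2⟩, ?_⟩
    have : e ∉ B := fun h => (h1 h).2 rfl
    simp [coordForm_apply, bvec, this]
  refine isFacet_of hG.1 (coordForm_integral e) (fun B _ => coordForm_bvec_nonneg e B)
    (ed_mem_lattice hG he hf) (coordForm_ed hef) fun y hy hy0 => ?_
  obtain ⟨B, hB⟩ := hd.1.exists_treeOn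
  obtain ⟨hBG, hB0⟩ := htree B hB
  obtain ⟨x, hyx, hx, hs⟩ := exists_sub_tree hBG hy
  have hxe : x e = 0 := by
    have h1 := congrArg (coordForm e) hyx
    rw [hy0, map_add, map_smul, hB0, smul_zero, zero_add] at h1
    exact h1.symm
  rw [hyx]
  refine Submodule.add_mem _ (Submodule.smul_mem _ _ (bvec_mem_faceSpan hBG hB0)) ?_
  refine mem_of_sum_zero (A := G.edgeSet \ {e}) (fun a ha b hb => ?_) (fun a ha => ?_) hs
  · rw [← hE] at ha hb
    exact ed_mem_of_biconnOn (R := (faceSpan G (coordForm e)).toAddSubgroup) hd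
      (fun B B' hB hB' => Submodule.sub_mem _
        (bvec_mem_faceSpan (htree B hB).1 (htree B hB).2)
        (bvec_mem_faceSpan (htree B' hB').1 (htree B' hB').2)) ha hb
  · by_cases hae : a = e
    · rw [hae, hxe]
    · exact hx a fun h => ha ⟨h, hae⟩

/-- The form of a good flat is the reduced equation of a facet. -/
lemma isFacet_flatForm (hG : BiconnOn G Set.univ) (hS : BiconnOn G S) (hSc : ConnOn G Sᶜ) :
    IsFacetForm (basePolytope G) (flatForm G S) ∧
      IsReducedForm (basePolytope G) (flatForm G S) := by
  have hne : S.Nonempty := hS.1.1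
  -- a tree on `S` extends to spanning trees on which the form vanishes
  have hzero : ∀ T B, TreeOn G T S → TreeOn G B Set.univ → T ⊆ B → flatForm G S (bvec B) = 0 := by
    intro T B hT hB hTB
    rw [flatForm_bvec_eq_zero_iff]
    refine le_antisymm (hB.card_inter_le hne) ?_
    rw [← hT.2.2]
    have hsub : T ⊆ B ∩ edgesIn G S := fun e he => ⟨hTB he, hT.1 he⟩
    exact Nat.add_le_add_right (Set.ncard_le_ncard hsub (Set.toFinite _)) 1
  obtain ⟨T, hT⟩ := hS.1.exists_treeOn
  obtain ⟨F, hFS, -, hF⟩ := hT.exists_extend hG.1 (Set.subset_univ S)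
  -- edges inside and outside of `E(S)`
  obtain ⟨s, hs, s', hs', hss'⟩ := hG.1.2 S (Set.subset_univ _) hne (by
    rintro rfl
    simpa using hSc.1)
  obtain ⟨c, hc, c', hc', hcc'⟩ := hS.1.2 {s} (by simpa using hs) (Set.singleton_nonempty s)
    (fun hh => by
      have := hS.two_le
      rw [← hh, Set.ncard_singleton] at this
      omega)
  refine isFacet_of hG.1 (flatForm_integral S) (fun B hB => flatForm_bvec_nonneg hB hne)
    (ed_mem_lattice hG (a := s(s, s')) (b := s(c, c')) hss' hcc')
    (flatForm_ed (fun h => hs'.2 (mk_mem_edgesIn.mp h).2.2)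
      (mk_mem_edgesIn.mpr ⟨hcc', (Set.mem_singleton_iff.mp hc) ▸ hs, hc'.1⟩)) fun y hy hy0 => ?_
  have hBG := hF T hT
  have hB0 := hzero T _ hT hBG Set.subset_union_left
  obtain ⟨x, hyx, hx, hsum⟩ := exists_sub_tree hBG hy
  have hxS : esum (edgesIn G S) x = 0 := by
    have h1 := congrArg (flatForm G S) hyx
    rw [hy0, map_add, map_smul, hB0, smul_zero, zero_add, flatForm_apply, mul_zero,
      zero_sub] at h1
    linarith
  have hsplit : ((x, 0) : (Sym2 V → ℝ) × ℝ) = ((edgesIn G S).indicator x, 0) +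
      (x - (edgesIn G S).indicator x, 0) := by
    simp
  rw [hyx, hsplit]
  refine Submodule.add_mem _ (Submodule.smul_mem _ _ (bvec_mem_faceSpan hBG hB0))
    (Submodule.add_mem _ ?_ ?_)
  · refine mem_of_sum_zero (A := edgesIn G S) (fun a ha b hb => ?_)
      (fun a ha => by simp [ha]) hxS
    refine ed_mem_of_biconnOn (R := (faceSpan G (flatForm G S)).toAddSubgroup) hS
      (fun T T' hT hT' => ?_) ha hb
    -- trees on `S` are compared through a common extension by `F`
    have hu : ∀ T, TreeOn G T S → bvec (T ∪ F) = bvec T + (F.indicator fun _ => 1, 0) := by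
      intro T hT
      have hd : Disjoint T F := hFS.symm.mono_left hT.1
      ext e
      · simp [bvec, Set.indicator_union_of_disjoint hd]
      · simp [bvec]
    have h1 := Submodule.sub_mem _
      (bvec_mem_faceSpan (hF T hT) (hzero T _ hT (hF T hT) Set.subset_union_left))
      (bvec_mem_faceSpan (hF T' hT') (hzero T' _ hT' (hF T' hT') Set.subset_union_left))
    rwa [hu T hT, hu T' hT', add_sub_add_right_eq_sub] at h1
  · refine mem_of_sum_zero (A := G.edgeSet \ edgesIn G S) (fun a ha b hb => ?_)
      (fun a ha => ?_) ?_
    · exact ed_mem_of_contract (R := (faceSpan G (flatForm G S)).toAddSubgroup) hG hSc hT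
        (fun B B' hB hB' hTB hTB' => Submodule.sub_mem _
          (bvec_mem_faceSpan hB (hzero T B hT hB hTB))
          (bvec_mem_faceSpan hB' (hzero T B' hT hB' hTB'))) ha hb
    · by_cases haS : a ∈ edgesIn G S
      · simp [haS]
      · have : a ∉ G.edgeSet := fun h => ha ⟨h, haS⟩
        simp [haS, hx a this]
    · have h1 : ∑ e, (edgesIn G S).indicator x e = 0 := hxS
      simp only [Pi.sub_apply, Finset.sum_sub_distrib, h1, hsum, sub_zero]

end Cone

/-! ### Reduction of connected sets to good flats -/

section Reduction

set_option linter.unusedSectionVars false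

variable {V : Type*} [Fintype V] [DecidableEq V] {G : SimpleGraph V} {X S : Set V}
  {B : Set (Sym2 V)} {h g : ((Sym2 V → ℝ) × ℝ) →ₗ[ℝ] ℝ} {y : (Sym2 V → ℝ) × ℝ}

/-- A connected set which is not `2`-connected splits at a cut vertex, and its form splits
accordingly. -/
lemma exists_split_form (hX : ConnOn G X) (hn : ¬ BiconnOn G X) (h2 : 2 ≤ X.ncard) :
    ∃ A C : Set V, A ⊂ X ∧ C ⊂ X ∧ ConnOn G A ∧ ConnOn G C ∧ 2 ≤ A.ncard ∧
      ∀ y, flatForm G X y = flatForm G A y + flatForm G C y := by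
  have hex : ∃ u ∈ X, ¬ ConnOn G (X \ {u}) := by
    by_contra! hh
    exact hn ⟨hX, hh⟩
  obtain ⟨u, hu, hcut⟩ := hex
  have hne : (X \ {u}).Nonempty := by
    rw [← Set.ncard_pos]
    have := Set.ncard_sdiff_singleton_add_one hu
    omega
  obtain ⟨A, C, hAC, hI, hAX, hCX, hAu, hA, hC, hno⟩ := exists_split hX hu hne hcut
  refine ⟨A, C, (hAC ▸ Set.subset_union_left).ssubset_of_ne hAX,
    (hAC ▸ Set.subset_union_right).ssubset_of_ne hCX, hA, hC, ?_, fun y => ?_⟩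
  · have huA : {u} ⊆ A := hI ▸ Set.inter_subset_left
    have := Set.ncard_lt_ncard (huA.ssubset_of_ne hAu.symm)
    rwa [Set.ncard_singleton] at this
  · have := flatForm_union_add_inter hno y
    rwa [hAC, hI, flatForm_singleton, add_zero] at this

/-- For a proper `2`-connected set `X` and a component `C` of its complement, the complement
of `C` is a good flat and `X ∪ C` is `2`-connected; these two sets have union `V` and
intersection `X`, whence the relation between the forms. -/
lemma exists_goodFlat (hG : BiconnOn G Set.univ) (hX : BiconnOn G X) (hXu : X ≠ Set.univ) :
    ∃ T T' : Set V, BiconnOn G T ∧ ConnOn G Tᶜ ∧ BiconnOn G T' ∧ X ⊂ T' ∧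
      ∀ y, flatForm G Set.univ y + flatForm G X y = flatForm G T y + flatForm G T' y := by
  obtain ⟨z, hz⟩ := (Set.ne_univ_iff_exists_notMem X).mp hXu
  obtain ⟨C, hCX, hzC, hC, hcl⟩ := exists_component G (Z := Xᶜ) hz
  have hXC : X ⊆ Cᶜ := fun x hx hxC => hCX hxC hx
  refine ⟨Cᶜ, X ∪ C, hG.union_closed hX hXC ?_, by rwa [compl_compl],
    hG.union_closed hX Set.subset_union_left ?_, ?_, fun y => ?_⟩
  · intro a ha b hab hbC
    exact ha.1 (hcl b hbC a ha.2 hab.symm)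
  · rintro a ⟨ha | ha, haX⟩ b hab
    · exact absurd ha haX
    · by_cases hb : b ∈ X
      · exact Or.inl hb
      · exact Or.inr (hcl a ha b hb hab)
  · exact Set.subset_union_left.ssubset_of_ne fun hh => hz (hh.symm.subset (Or.inr hzC))
  · have h1 := flatForm_union_add_inter (G := G) (X := Cᶜ) (Y := X ∪ C) ?_ y
    · have h2 : Cᶜ ∪ (X ∪ C) = Set.univ := by
        ext w
        by_cases w ∈ C <;> simp_all
      have h3 : Cᶜ ∩ (X ∪ C) = X := by
        ext w
        have := @hXC w
        by_cases w ∈ C <;> simp_all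
      rwa [h2, h3] at h1
    · rintro a ⟨haC, haX⟩ b ⟨hbX, hbC⟩ hab
      have hb : b ∈ C := not_not.mp hbC
      exact haX (Or.inr (hcl b hb a (fun h => haX (Or.inl h)) hab.symm))

lemma flatForm_nonneg_of_biconnOn {X : Set V} (hG : BiconnOn G Set.univ) (hy : flatForm G Set.univ y = 0)
    (hgood : ∀ T, BiconnOn G T → ConnOn G Tᶜ → 0 ≤ flatForm G T y) (hX : BiconnOn G X) :
    0 ≤ flatForm G X y := by
  by_cases hXu : X = Set.univ
  · rw [hXu, hy]
  · obtain ⟨T, T', hT, hTc, hT', hss, hmod⟩ := exists_goodFlat hG hX hXu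
    have h1 := hmod y
    have h2 := hgood T hT hTc
    have h3 := flatForm_nonneg_of_biconnOn hG hy hgood hT'
    linarith
termination_by Nat.card V - X.ncard
decreasing_by
  have h4 := Set.ncard_lt_ncard hss
  have h5 := Set.ncard_le_card T'
  omega

/-- The inequalities of the good flats imply those of all connected sets. -/
lemma flatForm_nonneg_of_connOn {X : Set V} (hG : BiconnOn G Set.univ) (hy : flatForm G Set.univ y = 0)
    (hgood : ∀ T, BiconnOn G T → ConnOn G Tᶜ → 0 ≤ flatForm G T y) (hX : ConnOn G X) :
    0 ≤ flatForm G X y := by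
  by_cases hb : BiconnOn G X
  · exact flatForm_nonneg_of_biconnOn hG hy hgood hb
  · by_cases h2 : 2 ≤ X.ncard
    · obtain ⟨A, C, hAX, hCX, hA, hC, -, hmod⟩ := exists_split_form hX hb h2
      have h3 := flatForm_nonneg_of_connOn hG hy hgood hA
      have h4 := flatForm_nonneg_of_connOn hG hy hgood hC
      rw [hmod]
      exact add_nonneg h3 h4
    · have h0 := (Set.ncard_pos).mpr hX.1
      obtain ⟨x, rfl⟩ := Set.ncard_eq_one.mp (show X.ncard = 1 by omega)
      rw [flatForm_singleton]
termination_by X.ncard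
decreasing_by
  · exact Set.ncard_lt_ncard hAX
  · exact Set.ncard_lt_ncard hCX

/-- The form of a proper connected set with at least two vertices dominates the form of some good
flat on all spanning trees. -/
lemma exists_goodFlat_le {X : Set V} (hG : BiconnOn G Set.univ) (hX : ConnOn G X) (h2 : 2 ≤ X.ncard)
    (hXu : X ≠ Set.univ) : ∃ T, BiconnOn G T ∧ ConnOn G Tᶜ ∧
      ∀ B, TreeOn G B Set.univ → flatForm G T (bvec B) ≤ flatForm G X (bvec B) := by
  by_cases hb : BiconnOn G X
  · obtain ⟨T, T', hT, hTc, hT', -, hmod⟩ := exists_goodFlat hG hb hXu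
    refine ⟨T, hT, hTc, fun B hB => ?_⟩
    have h1 := hmod (bvec B)
    have h2 := flatForm_bvec_nonneg hB hT'.1.1
    rw [flatForm_univ_bvec hB] at h1
    linarith
  · obtain ⟨A, C, hAX, hCX, hA, hC, hA2, hmod⟩ := exists_split_form hX hb h2
    obtain ⟨T, hT, hTc, hle⟩ := exists_goodFlat_le hG hA hA2
      (fun hh => hXu (Set.univ_subset_iff.mp (hh ▸ hAX.1)))
    refine ⟨T, hT, hTc, fun B hB => ?_⟩
    have h3 := hle B hB
    have h4 := flatForm_bvec_nonneg hB hC.1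
    rw [hmod]
    linarith
termination_by X.ncard
decreasing_by exact Set.ncard_lt_ncard hAX

/-! ### Minimum weight spanning trees -/

/-- The weight of an edge in the linear form `h`. -/
noncomputable def wt (h : ((Sym2 V → ℝ) × ℝ) →ₗ[ℝ] ℝ) (e : Sym2 V) : ℝ := h (Pi.single e 1, 0)

/-- The edges of weight at most `l`. -/
def level (G : SimpleGraph V) (h : ((Sym2 V → ℝ) × ℝ) →ₗ[ℝ] ℝ) (l : ℝ) : Set (Sym2 V) :=
  {e ∈ G.edgeSet | wt h e ≤ l}

lemma map_ed (a b : Sym2 V) : h (ed a b) = wt h a - wt h b := by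
  rw [wt, wt, ← map_sub]
  simp [ed]

lemma apply_eq_sum (x : Sym2 V → ℝ) : h (x, 0) = ∑ e, x e * wt h e := by
  have h1 : ((x, 0) : (Sym2 V → ℝ) × ℝ) = ∑ e, x e • ((Pi.single e 1, 0) : (Sym2 V → ℝ) × ℝ) := by
    ext f
    · simp [Prod.fst_sum, Finset.sum_apply, Pi.single_apply]
    · simp [Prod.snd_sum]
  rw [h1, map_sum]
  exact Finset.sum_congr rfl fun e _ => by rw [map_smul, smul_eq_mul, wt]

/-- Spanning trees of minimum weight stay connected on the components of every level: otherwise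
an edge of that level could be exchanged for a heavier tree edge. -/
lemma connOn_level (hB : TreeOn G B Set.univ)
    (hmin : ∀ B', TreeOn G B' Set.univ → h (bvec B) ≤ h (bvec B')) {l : ℝ}
    (hX : ConnOn (fromEdgeSet (level G h l)) X)
    (hcl : ∀ a ∈ X, ∀ b, (fromEdgeSet (level G h l)).Adj a b → b ∈ X) :
    ConnOn (fromEdgeSet (B ∩ level G h l)) X := by
  refine ⟨hX.1, fun Y hY hne hp => ?_⟩
  obtain ⟨y, hy, z, hz, hyz⟩ := hX.2 Y hY hne hp
  rw [fromEdgeSet_adj] at hyz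
  by_cases hyzB : s(y, z) ∈ B
  · exact ⟨y, hy, z, hz, (fromEdgeSet_adj _).mpr ⟨⟨hyzB, hyz.1⟩, hyz.2⟩⟩
  · obtain ⟨a, ha, b, hb, habB, htree⟩ := hB.exchange hyz.1.1 hyzB hy hz.2
    have hadj := fromEdgeSet_adj_of_mem (hB.1.trans edgesIn_subset) habB
    have h1 : bvec (insert s(y, z) (B \ {s(a, b)})) - bvec B = ed s(y, z) s(a, b) := by
      have h2 := bvec_insert_sub (a := s(y, z)) (b := s(a, b)) (T := B \ {s(a, b)})
        (fun hh => hyzB hh.1) (fun hh => hh.2 rfl)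
      rwa [Set.insert_sdiff_singleton, Set.insert_eq_of_mem habB] at h2
    have h3 := hmin _ htree
    have h4 := congrArg h h1
    rw [map_sub, map_ed] at h4
    have hab : s(a, b) ∈ level G h l :=
      ⟨edgesIn_subset (hB.1 habB), by
        have := hyz.1.2
        linarith⟩
    exact ⟨a, ha, b, ⟨hcl a (hY ha) b ((fromEdgeSet_adj _).mpr ⟨hab, hadj.ne⟩), hb⟩,
      (fromEdgeSet_adj _).mpr ⟨⟨habB, hab⟩, hadj.ne⟩⟩

lemma card_le_of_level (hB : TreeOn G B Set.univ)
    (hmin : ∀ B', TreeOn G B' Set.univ → h (bvec B) ≤ h (bvec B')) {l : ℝ}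
    (hX : ConnOn (fromEdgeSet (level G h l)) X)
    (hcl : ∀ a ∈ X, ∀ b, (fromEdgeSet (level G h l)).Adj a b → b ∈ X) :
    X.ncard ≤ (B ∩ (level G h l ∩ edgesIn G X)).ncard + 1 := by
  refine (connOn_level hB hmin hX hcl).card_le.trans (Nat.add_le_add_right ?_ 1)
  refine Set.ncard_le_ncard ?_ (Set.toFinite _)
  intro e he
  induction e with
  | _ a b =>
    rw [mk_mem_edgesIn, fromEdgeSet_adj] at he
    exact ⟨he.1.1.1, he.1.1.2, mk_mem_edgesIn.mpr ⟨he.1.1.2.1, he.2⟩⟩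

/-- On each level, within a union `Z` of components of that level, a point satisfying
the inequalities of all connected sets has at most as much mass as a minimum weight spanning tree;
proved by peeling off the components of the level. -/
lemma esum_level_le {p : Sym2 V → ℝ} (hp : ∀ e, 0 ≤ p e)
    (hf : ∀ X, ConnOn G X → 0 ≤ flatForm G X (p, 1)) (hB : TreeOn G B Set.univ)
    (hmin : ∀ B', TreeOn G B' Set.univ → h (bvec B) ≤ h (bvec B')) {l : ℝ} (Z : Set V)
    (hcl : ∀ a ∈ Z, ∀ b, (fromEdgeSet (level G h l)).Adj a b → b ∈ Z) :
    esum (level G h l ∩ edgesIn G Z) (p - B.indicator fun _ => 1) ≤ 0 := by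
  rcases Z.eq_empty_or_nonempty with rfl | ⟨z, hz⟩
  · have : edgesIn G (∅ : Set V) = ∅ := by
      ext e
      induction e with
      | _ a b => simp
    simp [this, esum_apply]
  · obtain ⟨X, hXZ, hzX, hX, hXcl⟩ := exists_component (fromEdgeSet (level G h l)) hz
    have hXcl' : ∀ a ∈ X, ∀ b, (fromEdgeSet (level G h l)).Adj a b → b ∈ X :=
      fun a ha b hab => hXcl a ha b (hcl a (hXZ ha) b hab) hab
    have hrest := esum_level_le hp hf hB hmin (l := l) (Z \ X) (fun a ha b hab =>
      ⟨hcl a ha.1 b hab, fun hbX => ha.2 (hXcl' b hbX a hab.symm)⟩)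
    have hle : fromEdgeSet (level G h l) ≤ G := by
      intro a b hab
      exact ((fromEdgeSet_adj _).mp hab).1.1
    have hone : esum (level G h l ∩ edgesIn G X) (p - B.indicator fun _ => 1) ≤ 0 := by
      have h1 := hf X (hX.mono hle)
      rw [flatForm_apply, mul_one] at h1
      have h2 : esum (level G h l ∩ edgesIn G X) p ≤ esum (edgesIn G X) p := by
        rw [esum_apply, esum_apply]
        exact Finset.sum_le_sum fun e _ =>
          Set.indicator_le_indicator_of_subset Set.inter_subset_right hp e
      have h3 : (X.ncard : ℝ) ≤ ((B ∩ (level G h l ∩ edgesIn G X)).ncard : ℝ) + 1 := by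
        exact_mod_cast card_le_of_level hB hmin hX hXcl'
      rw [map_sub, esum_indicator_one]
      linarith
    have hunion : level G h l ∩ edgesIn G Z =
        (level G h l ∩ edgesIn G X) ∪ (level G h l ∩ edgesIn G (Z \ X)) := by
      ext e
      induction e with
      | _ a b =>
        simp only [Set.mem_inter_iff, Set.mem_union, mk_mem_edgesIn, Set.mem_sdiff]
        constructor
        · rintro ⟨hl, hab, ha, hb⟩
          have hadj := (fromEdgeSet_adj (level G h l)).mpr ⟨hl, hab.ne⟩
          by_cases haX : a ∈ X
          · exact Or.inl ⟨hl, hab, haX, hXcl' a haX b hadj⟩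
          · exact Or.inr ⟨hl, hab, ⟨ha, haX⟩, hb, fun h => haX (hXcl' b h a hadj.symm)⟩
        · rintro (⟨hl, hab, ha, hb⟩ | ⟨hl, hab, ha, hb⟩)
          · exact ⟨hl, hab, hXZ ha, hXZ hb⟩
          · exact ⟨hl, hab, ha.1, hb.1⟩
    have hinter : (level G h l ∩ edgesIn G X) ∩ (level G h l ∩ edgesIn G (Z \ X)) = ∅ := by
      ext e
      induction e with
      | _ a b =>
        simp only [Set.mem_inter_iff, mk_mem_edgesIn, Set.mem_sdiff, Set.mem_empty_iff_false]
        tauto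
    have hadd := esum_union_add_inter (level G h l ∩ edgesIn G X)
      (level G h l ∩ edgesIn G (Z \ X)) (p - B.indicator fun _ => 1)
    rw [← hunion, hinter] at hadd
    have h0 : esum ∅ (p - B.indicator fun _ => (1 : ℝ)) = 0 := by simp [esum_apply]
    linarith
termination_by Z.ncard
decreasing_by
  exact Set.ncard_lt_ncard (Set.sdiff_subset.ssubset_of_ne
    fun hh => (hh.symm.subset hz).2 hzX)

/-- Summation by parts: nonpositive sums over all sublevel sets of `c` and total sum zero force a
nonnegative weighted sum. -/
lemma sum_mul_nonneg {ι : Type*} [Fintype ι] (a c : ι → ℝ) (h0 : ∑ e, a e = 0)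
    (hl : ∀ l, ∑ e with c e ≤ l, a e ≤ 0) : 0 ≤ ∑ e, a e * c e := by
  classical
  -- the inductive claim runs over the initial segments `s` of the set of values of `c`
  have key : ∀ s : Finset ℝ, (∀ l ∈ s, ∀ e, c e ≤ l → c e ∈ s) → ∀ M, (∀ l ∈ s, l ≤ M) →
      ∑ e with c e ∈ s, a e * (M - c e) ≤ 0 := by
    intro s
    induction s using Finset.induction_on_max with
    | empty => simp
    | insert m s hm ih =>
      intro hs M hM
      have h1 : ∑ e with c e ∈ insert m s, a e * (M - c e) =
          (M - m) * ∑ e with c e ≤ m, a e + ∑ e with c e ∈ s, a e * (m - c e) := by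
        have h2 : (Finset.univ.filter fun e => c e ≤ m) =
            Finset.univ.filter fun e => c e ∈ insert m s := by
          ext e
          simp only [Finset.mem_filter, Finset.mem_univ, true_and]
          refine ⟨hs m (Finset.mem_insert_self m s) e, fun h => ?_⟩
          rcases Finset.mem_insert.mp h with h | h
          · exact h.le
          · exact (hm _ h).le
        have h3 : ∑ e with c e ∈ s, a e * (m - c e) =
            ∑ e with c e ∈ insert m s, a e * (m - c e) := by
          refine Finset.sum_subset (fun e he => ?_) fun e he he' => ?_
          · simp only [Finset.mem_filter, Finset.mem_univ, true_and] at he ⊢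
            exact Finset.mem_insert_of_mem he
          · simp only [Finset.mem_filter, Finset.mem_univ, true_and] at he he'
            rw [(Finset.mem_insert.mp he).resolve_right he', sub_self, mul_zero]
        rw [h2, h3, Finset.mul_sum, ← Finset.sum_add_distrib]
        exact Finset.sum_congr rfl fun e _ => by ring
      have h4 := ih (fun l hl e he => (Finset.mem_insert.mp
        (hs l (Finset.mem_insert_of_mem hl) e he)).resolve_left
          (he.trans_lt (hm l hl)).ne) m (fun l hl => (hm l hl).le)
      have h5 := mul_nonpos_of_nonneg_of_nonpos
        (sub_nonneg.mpr (hM m (Finset.mem_insert_self m s))) (hl m)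
      rw [h1]
      linarith
  obtain ⟨M, hM⟩ := (Finset.univ.image c).bddAbove
  have h1 := key (Finset.univ.image c) (fun _ _ e _ => Finset.mem_image_of_mem c (Finset.mem_univ e))
    M (fun l hl => hM hl)
  have h2 : (Finset.univ.filter fun e => c e ∈ Finset.univ.image c) = Finset.univ := by
    ext e
    simp
  rw [h2] at h1
  simp only [mul_sub, Finset.sum_sub_distrib, ← Finset.sum_mul, h0, zero_mul, zero_sub] at h1
  linarith

/-- The base polytope is cut out by the inequalities of the connected vertex sets. -/
lemma mem_basePolytope (hG : ConnOn G Set.univ) {p : Sym2 V → ℝ} (hp : ∀ e, 0 ≤ p e)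
    (hpE : ∀ e ∉ G.edgeSet, p e = 0) (hu : flatForm G Set.univ (p, 1) = 0)
    (hf : ∀ X, ConnOn G X → 0 ≤ flatForm G X (p, 1)) : p ∈ basePolytope G := by
  by_contra hn
  obtain ⟨f, u, hfu, hfP⟩ := geometric_hahn_banach_point_closed (convex_convexHull ℝ _)
    (Set.Finite.isClosed_convexHull (𝕜 := ℝ) (s := {x | ∃ B : Set (Sym2 V), IsGraphicBasis G B ∧
      x = B.indicator fun _ => (1 : ℝ)}) (((Set.finite_univ (α := Set (Sym2 V))).image
        fun B => B.indicator fun _ => (1 : ℝ)).subset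
          (by
            rintro _ ⟨B, -, rfl⟩
            exact ⟨B, trivial, rfl⟩))) hn
  set h : ((Sym2 V → ℝ) × ℝ) →ₗ[ℝ] ℝ := f.toLinearMap ∘ₗ LinearMap.fst ℝ _ ℝ with hh
  obtain ⟨B, hB, hmin⟩ := Set.exists_min_image {B | TreeOn G B Set.univ} (fun B => h (bvec B))
    (Set.toFinite _) hG.exists_treeOn
  have hmin' : ∀ B', TreeOn G B' Set.univ → h (bvec B) ≤ h (bvec B') := hmin
  have hsupp : ∀ e ∉ G.edgeSet, (p - B.indicator fun _ => (1 : ℝ)) e = 0 := by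
    intro e he
    have : e ∉ B := fun h => he (edgesIn_subset (hB.1 h))
    simp [this, hpE e he]
  have h1 := sum_mul_nonneg (p - B.indicator fun _ => (1 : ℝ)) (wt h) ?_ fun l => ?_
  · rw [← apply_eq_sum] at h1
    have h2 : h (p - B.indicator fun _ => (1 : ℝ), 0) = f p - f (B.indicator fun _ => (1 : ℝ)) := by
      simp [hh]
    have h3 := hfP _ (indicator_mem_basePolytope hG hB)
    linarith
  · have h2 := flatForm_univ_bvec hB
    have h3 : flatForm G Set.univ ((p, 1) - bvec B) = 0 := by rw [map_sub, hu, h2, sub_zero]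
    have h4 : ((p, 1) - bvec B : (Sym2 V → ℝ) × ℝ) = (p - B.indicator fun _ => (1 : ℝ), 0) := by
      simp [bvec]
    rw [h4, flatForm_apply, edgesIn_univ, ← esum_of_support (A := Set.univ)
      (fun e _ he => hsupp e he) (Set.subset_univ _)] at h3
    simp only [esum_apply, mul_zero, zero_sub, neg_eq_zero, Set.indicator_univ] at h3
    exact h3
  · have h2 := esum_level_le hp hf hB hmin' (l := l) Set.univ (fun _ _ _ _ => trivial)
    have hsub : level G h l ⊆ G.edgeSet := fun e he => he.1
    rw [edgesIn_univ, Set.inter_eq_left.mpr hsub,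
      ← esum_of_support (A := {e | wt h e ≤ l}) (C := level G h l) (fun e he he' => hsupp e fun h => he' ⟨h, he⟩)
      (fun e he => he.2), esum_apply] at h2
    rw [Finset.sum_filter]
    simpa [Set.indicator_apply] using h2

end Reduction

/-! ### The all-ones point at height two -/

section Main

set_option linter.unusedSectionVars false

variable {V : Type*} [Fintype V] [DecidableEq V] {G : SimpleGraph V} {S : Set V}
  {h : ((Sym2 V → ℝ) × ℝ) →ₗ[ℝ] ℝ}

lemma flatForm_one (X : Set V) : flatForm G X (G.edgeSet.indicator fun _ => 1, 2) =
    2 * ((X.ncard : ℝ) - 1) - ((edgesIn G X).ncard : ℝ) := by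
  rw [flatForm_apply, esum_indicator_one, Set.inter_eq_right.mpr edgesIn_subset, mul_comm]

lemma exists_other_edge (hG : ConnOn G Set.univ) (hc : 3 ≤ Nat.card V) (e : Sym2 V) :
    ∃ f ∈ G.edgeSet, e ≠ f := by
  induction e with
  | _ u v =>
    have hw : ∃ w, w ∉ ({u, v} : Set V) := by
      by_contra! hh
      have h1 := Set.ncard_insert_le u {v}
      rw [Set.eq_univ_of_forall hh, Set.ncard_univ, Set.ncard_singleton] at h1
      omega
    obtain ⟨w, hw⟩ := hw
    obtain ⟨a, rfl, z, -, hz⟩ := hG.2 {w} (Set.subset_univ _) (Set.singleton_nonempty w) (by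
      intro hh
      have h1 := Set.ncard_singleton w
      rw [hh, Set.ncard_univ] at h1
      omega)
    refine ⟨s(a, z), hz, fun hh => hw ?_⟩
    have : a ∈ s(u, v) := hh ▸ Sym2.mem_mk_left a z
    simpa using this

/-- If `G` is a single edge, the base polytope is a point and the height is a reduced facet
form. -/
lemma isFacet_snd (hG : BiconnOn G Set.univ) (hc : Nat.card V = 2) :
    IsFacetForm (basePolytope G) (LinearMap.snd ℝ _ ℝ) ∧
      IsReducedForm (basePolytope G) (LinearMap.snd ℝ _ ℝ) := by
  obtain ⟨B, hB⟩ := hG.1.exists_treeOn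
  refine isFacet_of hG.1 (lattice_integral fun p _ => ⟨1, by simp⟩)
    (fun B _ => by simp [bvec]) (bvec_mem_lattice hG.1 hB) (by simp [bvec]) fun y hy hy0 => ?_
  obtain ⟨x, hyx, hx, hs⟩ := exists_sub_tree hB hy
  have hy2 : y.2 = 0 := hy0
  rw [hyx, hy2, zero_smul, zero_add]
  refine mem_of_sum_zero (fun a ha b hb => ?_) hx hs
  have hab : a = b := by
    induction a with
    | _ u v =>
      have huv : G.Adj u v := ha
      have h1 : ({u, v} : Set V) = Set.univ := by
        refine Set.eq_of_subset_of_ncard_le (Set.subset_univ _) ?_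
        rw [Set.ncard_pair huv.ne, Set.ncard_univ, hc]
      have h2 := edgesIn_pair huv
      rw [h1, edgesIn_univ] at h2
      exact (Set.mem_singleton_iff.mp (h2 ▸ hb)).symm
  have : ed a b = 0 := by simp [hab, ed]
  rw [this]
  exact Submodule.zero_mem _

/-- Necessity of the equalities. -/
lemma spade_of_gorenstein (hG : BiconnOn G Set.univ) (hP : IsDeltaGorenstein (basePolytope G) 2) :
    G.edgeSet.ncard = 2 * (Nat.card V - 1) ∧
      ∀ S, BiconnOn G S → ConnOn G Sᶜ → (edgesIn G S).ncard = 2 * S.ncard - 3 := by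
  obtain ⟨v, -, hvL, hval⟩ := hP
  rw [Nat.cast_ofNat] at hvL hval
  have h2 := hG.two_le
  rw [Set.ncard_univ] at h2
  have h3 : 3 ≤ Nat.card V := by
    by_contra hlt
    obtain ⟨hF, hR⟩ := isFacet_snd hG (by omega)
    have := hval _ hF hR
    norm_num at this
  have hvT := lattice_subset_treeSpan hG.1 hvL
  -- every edge gives a facet: its endpoints form a good flat or it can be deleted
  have hone : ∀ e ∈ G.edgeSet, v e = 1 := by
    intro e he
    induction e with
    | _ a b =>
      have hab : G.Adj a b := he
      by_cases hc : ConnOn G {a, b}ᶜ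
      · obtain ⟨hF, hR⟩ := isFacet_flatForm hG (biconnOn_pair hab) hc
        have := hval _ hF hR
        rw [flatForm_apply, edgesIn_pair hab, Set.ncard_pair hab.ne, esum_apply] at this
        simp [Set.indicator_apply] at this
        linarith
      · obtain ⟨f, hf, hef⟩ := exists_other_edge hG.1 h3 s(a, b)
        obtain ⟨hF, hR⟩ := isFacet_coordForm hG he hf hef (biconnOn_deleteEdges hG h3 hab hc)
        exact hval _ hF hR
  have hv : v = G.edgeSet.indicator fun _ => 1 := by
    ext e
    by_cases he : e ∈ G.edgeSet
    · rw [hone e he, Set.indicator_of_mem he]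
    · rw [Set.indicator_of_notMem he]
      exact treeSpan_support hvT he
  subst hv
  refine ⟨?_, fun S hS hSc => ?_⟩
  · have h4 := treeSpan_flatForm_univ hvT
    rw [flatForm_one, edgesIn_univ, Set.ncard_univ, sub_eq_zero] at h4
    zify [show 1 ≤ Nat.card V by omega]
    exact_mod_cast h4.symm
  · obtain ⟨hF, hR⟩ := isFacet_flatForm hG hS hSc
    have h4 := hval _ hF hR
    rw [flatForm_one] at h4
    have h5 := hS.two_le
    zify [show 3 ≤ 2 * S.ncard by omega]
    have h6 : ((edgesIn G S).ncard : ℝ) = 2 * (S.ncard : ℝ) - 3 := by linarith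
    exact_mod_cast h6

/-- On the span of the cone, every reduced facet form coincides with a coordinate form of an edge
or with the form of a good flat. The trees of the facet are the minimum weight spanning trees for
the coefficients of the form; a component of a sublevel set of these weights determines the edge or the good flat. -/
lemma facet_classification (hG : BiconnOn G Set.univ) (hc : 3 ≤ Nat.card V)
    (hF : IsFacetForm (basePolytope G) h) (hR : IsReducedForm (basePolytope G) h) :
    (∃ e ∈ G.edgeSet, ∀ y ∈ treeSpan G, h y = coordForm e y) ∨
      ∃ T, BiconnOn G T ∧ ConnOn G Tᶜ ∧ ∀ y ∈ treeSpan G, h y = flatForm G T y := by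
  have hh0 : ∀ B, TreeOn G B Set.univ → 0 ≤ h (bvec B) := fun B hB =>
    hF.1 _ (bvec_mem_cone hG.1 hB)
  -- an edge missed by all trees of the face is as good as a facet of its coordinate form
  have hcoord : ∀ e ∈ G.edgeSet, (∀ B, TreeOn G B Set.univ → h (bvec B) = 0 → e ∉ B) →
      ∃ e ∈ G.edgeSet, ∀ y ∈ treeSpan G, h y = coordForm e y := by
    intro e he hmiss
    obtain ⟨f, hf, hef⟩ := exists_other_edge hG.1 hc e
    exact ⟨e, he, fun y hy => facet_unique hG.1 hF hR (coordForm_integral e)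
      (fun B _ => coordForm_bvec_nonneg e B)
      (fun B hB hB0 => by simp [coordForm_apply, bvec, hmiss B hB hB0])
      (ed_mem_lattice hG he hf) (coordForm_ed hef) hy⟩
  by_cases hz : ∃ B, TreeOn G B Set.univ ∧ h (bvec B) = 0
  swap
  · obtain ⟨a, b⟩ : Nonempty G.edgeSet := by
      obtain ⟨f, hf, -⟩ := exists_other_edge hG.1 hc s(hG.1.1.some, hG.1.1.some)
      exact ⟨f, hf⟩
    exact Or.inl (hcoord a b fun B hB hB0 => absurd ⟨B, hB, hB0⟩ hz)
  obtain ⟨B₀, hB₀, hB₀0⟩ := hz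
  -- the weights are not constant, since otherwise the form vanishes on the whole cone
  have hne : ∃ e₁ ∈ G.edgeSet, ∃ e₂ ∈ G.edgeSet, wt h e₁ < wt h e₂ := by
    by_contra! hconst
    obtain ⟨y₀, hy₀, hy₀1⟩ := hR.2
    obtain ⟨x, hyx, hx, hs⟩ := exists_sub_tree hB₀ (lattice_subset_treeSpan hG.1 hy₀)
    have h1 : ((x, 0) : (Sym2 V → ℝ) × ℝ) ∈ LinearMap.ker h :=
      mem_of_sum_zero (fun a ha b hb => by
        rw [LinearMap.mem_ker, map_ed]
        linarith [hconst a ha b hb, hconst b hb a ha]) hx hs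
    rw [hyx, map_add, map_smul, hB₀0, LinearMap.mem_ker.mp h1] at hy₀1
    simp at hy₀1
  obtain ⟨e₁, he₁, e₂, he₂, hlt⟩ := hne
  have hmin : ∀ B, TreeOn G B Set.univ → h (bvec B) = 0 →
      ∀ B', TreeOn G B' Set.univ → h (bvec B) ≤ h (bvec B') :=
    fun B _ hB0 B' hB' => hB0 ▸ hh0 B' hB'
  induction e₁ with
  | _ a b =>
  have hab : G.Adj a b := he₁
  set l := wt h s(a, b) with hl
  obtain ⟨X, -, haX, hX, hcl⟩ := exists_component (fromEdgeSet (level G h l)) (Set.mem_univ a)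
  have hcl' : ∀ c ∈ X, ∀ d, (fromEdgeSet (level G h l)).Adj c d → d ∈ X :=
    fun c hc d hcd => hcl c hc d trivial hcd
  have hbX : b ∈ X := hcl' a haX b ((fromEdgeSet_adj _).mpr ⟨⟨he₁, le_rfl⟩, hab.ne⟩)
  have hX2 : 2 ≤ X.ncard := by
    rw [← Set.ncard_pair hab.ne]
    exact Set.ncard_le_ncard (Set.pair_subset haX hbX)
  have hXG : ConnOn G X := hX.mono fun c d hcd => ((fromEdgeSet_adj _).mp hcd).1.1
  by_cases hXu : X = Set.univ
  · -- all trees of the face live inside the level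
    refine Or.inl (hcoord e₂ he₂ fun B hB hB0 he₂B => ?_)
    have h1 := card_le_of_level hB (hmin B hB hB0) hX hcl'
    have h2 : B ∩ (level G h l ∩ edgesIn G X) = B := by
      refine Set.eq_of_subset_of_ncard_le Set.inter_subset_left ?_
      have h3 := hB.2.2
      rw [← hXu] at h3
      omega
    have h3 : e₂ ∈ level G h l := (h2.symm ▸ he₂B).2.1
    exact absurd h3.2 (not_le.mpr hlt)
  · obtain ⟨T, hT, hTc, hle⟩ := exists_goodFlat_le hG hXG hX2 hXu
    obtain ⟨-, -, y₀, hy₀, hy₀1⟩ := isFacet_flatForm hG hT hTc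
    refine Or.inr ⟨T, hT, hTc, fun y hy => facet_unique hG.1 hF hR (flatForm_integral T)
      (fun B hB => flatForm_bvec_nonneg hB hT.1.1) (fun B hB hB0 => ?_) hy₀ hy₀1 hy⟩
    refine le_antisymm ((hle B hB).trans_eq ?_) (flatForm_bvec_nonneg hB hT.1.1)
    rw [flatForm_bvec_eq_zero_iff]
    have h1 := card_le_of_level hB (hmin B hB hB0) hX hcl'
    have h2 : (B ∩ (level G h l ∩ edgesIn G X)).ncard ≤ (B ∩ edgesIn G X).ncard :=
      Set.ncard_le_ncard (Set.inter_subset_inter_right _ Set.inter_subset_right) (Set.toFinite _)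
    have h3 := hB.card_inter_le (X := X) ⟨a, haX⟩
    omega

/-- Sufficiency of the equalities. -/
lemma gorenstein_of_spade (hG : BiconnOn G Set.univ)
    (hE : G.edgeSet.ncard = 2 * (Nat.card V - 1))
    (hS : ∀ S, BiconnOn G S → ConnOn G Sᶜ → (edgesIn G S).ncard = 2 * S.ncard - 3) :
    IsDeltaGorenstein (basePolytope G) 2 := by
  have h2 := hG.two_le
  rw [Set.ncard_univ] at h2
  have h3 : 3 ≤ Nat.card V := by
    by_contra hlt
    -- a graph on two vertices has at most one edge
    obtain ⟨x, -⟩ := hG.1.1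
    obtain ⟨u, -, v, -, huv⟩ := hG.1.2 {x} (Set.subset_univ _) (Set.singleton_nonempty x) (by
      intro hh
      have h1 := Set.ncard_singleton x
      rw [hh, Set.ncard_univ] at h1
      omega)
    have h1 : ({u, v} : Set V) = Set.univ := by
      refine Set.eq_of_subset_of_ncard_le (Set.subset_univ _) ?_
      rw [Set.ncard_pair huv.ne, Set.ncard_univ]
      omega
    have h4 := edgesIn_pair huv
    rw [h1, edgesIn_univ] at h4
    rw [h4, Set.ncard_singleton] at hE
    omega
  set v : Sym2 V → ℝ := G.edgeSet.indicator fun _ => 1 with hv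
  have hu : flatForm G Set.univ (v, 2) = 0 := by
    rw [flatForm_one, edgesIn_univ, hE, Set.ncard_univ]
    push_cast [show 1 ≤ Nat.card V by omega]
    ring
  have hgood : ∀ T, BiconnOn G T → ConnOn G Tᶜ → flatForm G T (v, 2) = 1 := by
    intro T hT hTc
    have h5 := hT.two_le
    rw [flatForm_one, hS T hT hTc]
    push_cast [show 3 ≤ 2 * T.ncard by omega]
    ring
  have hnn : ∀ X, ConnOn G X → 0 ≤ flatForm G X (v, 2) := fun X hX =>
    flatForm_nonneg_of_connOn hG hu (fun T hT hTc => (hgood T hT hTc).symm ▸ zero_le_one) hX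
  have hhalf : (((2 : ℝ)⁻¹ • v, 1) : (Sym2 V → ℝ) × ℝ) = (2 : ℝ)⁻¹ • (v, 2) := by
    rw [Prod.smul_mk, smul_eq_mul, inv_mul_cancel₀ two_ne_zero]
  have hv0 : ∀ e, 0 ≤ v e := fun e => Set.indicator_nonneg (fun _ _ => zero_le_one) e
  have hvE : ∀ e ∉ G.edgeSet, v e = 0 := fun e he => Set.indicator_of_notMem he _
  have hmem : (2 : ℝ)⁻¹ • v ∈ basePolytope G := by
    refine mem_basePolytope hG.1 (fun e => mul_nonneg (by norm_num) (hv0 e))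
      (fun e he => by simp [hvE e he]) ?_ fun X hX => ?_
    · rw [hhalf, map_smul, hu, smul_zero]
    · rw [hhalf, map_smul]
      exact mul_nonneg (by norm_num) (hnn X hX)
  have hvL : (v, 2) ∈ coneLattice (basePolytope G) := by
    obtain ⟨B, hB⟩ := hG.1.exists_treeOn
    have hBE : B ⊆ G.edgeSet := hB.1.trans edgesIn_subset
    have h4 : ((v - 2 • B.indicator fun _ => (1 : ℝ), 0) : (Sym2 V → ℝ) × ℝ) ∈
        coneLattice (basePolytope G) := by
      refine mem_of_sum_zero_int (A := G.edgeSet) (fun a ha b hb => ed_mem_lattice hG ha hb)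
        (fun e he => ?_) ?_ fun e => ?_
      · have heB : e ∉ B := fun hh => he (hBE hh)
        simp [hvE e he, heB]
      · have h5 : esum Set.univ (v - 2 • B.indicator fun _ => (1 : ℝ)) = 0 := by
          rw [map_sub, map_nsmul, hv, esum_indicator_one, esum_indicator_one, Set.inter_univ,
            Set.inter_univ, hE]
          have h6 := hB.2.2
          rw [Set.ncard_univ] at h6
          rw [← h6]
          simp
        simpa only [esum_apply, Set.indicator_univ] using h5
      · by_cases h5 : e ∈ G.edgeSet <;> by_cases h6 : e ∈ B
        · exact ⟨-1, by simp [hv, h5, h6]; norm_num⟩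
        · exact ⟨1, by simp [hv, h5, h6]⟩
        · exact absurd (hBE h6) h5
        · exact ⟨0, by simp [hv, h5, h6]⟩
    have h5 : ((v, 2) : (Sym2 V → ℝ) × ℝ) =
        (2 : ℤ) • bvec B + (v - 2 • B.indicator fun _ => (1 : ℝ), 0) := by
      ext e
      · simp [bvec]
      · simp [bvec]
    rw [h5]
    exact Submodule.add_mem _ (Submodule.smul_mem _ _ (bvec_mem_lattice hG.1 hB)) h4
  refine ⟨v, ?_, by rwa [Nat.cast_ofNat], fun h hF hR => ?_⟩
  · rw [Nat.cast_ofNat]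
    exact ⟨_, hmem, by simp⟩
  · rw [Nat.cast_ofNat]
    have hvT := lattice_subset_treeSpan hG.1 hvL
    obtain ⟨e, he, heq⟩ | ⟨T, hT, hTc, heq⟩ := facet_classification hG h3 hF hR
    · rw [heq _ hvT, coordForm_apply]
      change v e = 1
      rw [hv, Set.indicator_of_mem he]
    · rw [heq _ hvT, hgood T hT hTc]

end Main

theorem stmt15 {V : Type*} [Fintype V] [DecidableEq V] (G : SimpleGraph V)
    (h2c : IsTwoConnected G) :
    IsDeltaGorenstein (basePolytope G) 2 ↔
      (G.edgeSet.ncard = 2 * (Nat.card V - 1) ∧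
       ∀ S : Set V, IsGoodFlat G S → (edgesIn G S).ncard = 2 * S.ncard - 3) := by
  have hG := isTwoConnected_iff_biconnOn.mp h2c
  simp only [isGoodFlat_iff hG, and_imp]
  exact ⟨spade_of_gorenstein hG, fun h => gorenstein_of_spade hG h.1 h.2⟩

end Gor
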